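/- arXiv:1408.5659 — 2 statements merged into one kernel-verified Lean document; each statement's English description precedes it below -/
import Mathlib

section
/- Let k ∈ ℕ, 1 ≤ q < p ≤ ∞, α, β ∈ J_p, and δ > 0. Then there exist constants c₁, c₂ > 0, depending only on k, q, p, α, β, such that c₁·(A + B) ≤ S ≤ c₂·(A + B), where S := sup_{f ∈ B_p^{α,β} ∩ M^k} ω_φ^k(f, δ)_{w_{α,β}, q}, A := sup_{f ∈ B_p^{α,β} ∩ M_+^k} ω_φ^k(f, δ)_{w_{α,β}, q}, and B := sup_{f ∈ B_p^{β,α} ∩ M_+^k} ω_φ^k(f, δ)_{w_{β,α}, q}. -/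
open MeasureTheory Set Filter
open scoped ENNReal

noncomputable section

/-- The Jacobi weight `w_{α,β}(x) = (1+x)^α (1-x)^β`. -/
def jacobi (α β : ℝ) (x : ℝ) : ℝ := (1 + x) ^ α * (1 - x) ^ β

/-- `φ(x) = √(1-x²)`. -/
def phiW (x : ℝ) : ℝ := Real.sqrt (1 - x ^ 2)

/-- The `L^p` norm of `g` on the interval `[a,b]` (essential sup when `p = ∞`). -/
def LpOn (g : ℝ → ℝ) (p : ℝ≥0∞) (a b : ℝ) : ℝ≥0∞ :=
  eLpNorm g p (volume.restrict (Icc a b))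

/-- The `k`-th symmetric difference `Δ_h^k(f,x)` relative to `[-1,1]`. -/
def symmDelta (k : ℕ) (h : ℝ) (f : ℝ → ℝ) (x : ℝ) : ℝ :=
  if (x - k * h / 2 ∈ Icc (-1 : ℝ) 1 ∧ x + k * h / 2 ∈ Icc (-1 : ℝ) 1) then
    ∑ i ∈ Finset.range (k + 1), ((k.choose i : ℝ) * (-1 : ℝ) ^ (k - i) * f (x - k * h / 2 + i * h))
  else 0

/-- Main-part weighted modulus `Ω_φ^k(f,δ)_{w,p}`. -/
def OmegaMain (k : ℕ) (f : ℝ → ℝ) (δ : ℝ) (wt : ℝ → ℝ) (p : ℝ≥0∞) : ℝ≥0∞ :=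
  ⨆ h ∈ Ioc (0 : ℝ) δ,
    LpOn (fun x => wt x * symmDelta k (h * phiW x) f x) p
      (-1 + 2 * (k : ℝ) ^ 2 * h ^ 2) (1 - 2 * (k : ℝ) ^ 2 * h ^ 2)

/-- Forward part `Ω→_φ^k(f,δ)_{w,p}`. -/
def OmegaFwd (k : ℕ) (f : ℝ → ℝ) (δ : ℝ) (wt : ℝ → ℝ) (p : ℝ≥0∞) : ℝ≥0∞ :=
  ⨆ h ∈ Ioc (0 : ℝ) (2 * (k : ℝ) ^ 2 * δ ^ 2),
    LpOn (fun x => wt x * symmDelta k h f (x + k * h / 2)) p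
      (-1) (-1 + 2 * (k : ℝ) ^ 2 * δ ^ 2)

/-- Backward part `Ω←_φ^k(f,δ)_{w,p}`. -/
def OmegaBwd (k : ℕ) (f : ℝ → ℝ) (δ : ℝ) (wt : ℝ → ℝ) (p : ℝ≥0∞) : ℝ≥0∞ :=
  ⨆ h ∈ Ioc (0 : ℝ) (2 * (k : ℝ) ^ 2 * δ ^ 2),
    LpOn (fun x => wt x * symmDelta k h f (x - k * h / 2)) p
      (1 - 2 * (k : ℝ) ^ 2 * δ ^ 2) 1

/-- Weighted Ditzian–Totik modulus `ω_φ^k(f,δ)_{w,p}`. -/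
def omegaDT (k : ℕ) (f : ℝ → ℝ) (δ : ℝ) (wt : ℝ → ℝ) (p : ℝ≥0∞) : ℝ≥0∞ :=
  OmegaMain k f δ wt p + OmegaFwd k f δ wt p + OmegaBwd k f δ wt p

/-- `f` is `k`-monotone on `(-1,1)`: all `k`-th divided differences over `k+1` distinct
points of `(-1,1)` are nonnegative. -/
def kMonotoneOn (k : ℕ) (f : ℝ → ℝ) : Prop :=
  ∀ x : Fin (k + 1) → ℝ, Function.Injective x → (∀ i, x i ∈ Ioo (-1 : ℝ) 1) →
    0 ≤ ∑ i, f (x i) / ∏ j ∈ Finset.univ.erase i, (x i - x j)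

/-- `M^k`, the class of `k`-monotone functions on `(-1,1)`. -/
def MSet (k : ℕ) : Set (ℝ → ℝ) := {f | kMonotoneOn k f}

/-- `M_+^k`, the `k`-monotone functions on `(-1,1)` vanishing on `(-1,0]`. -/
def MPlus (k : ℕ) : Set (ℝ → ℝ) :=
  {f | kMonotoneOn k f ∧ ∀ x : ℝ, -1 < x → x ≤ 0 → f x = 0}

/-- `J_p = (-1/p, ∞)` for finite `p`, `[0,∞)` for `p = ∞`. -/
def Jset (p : ℝ≥0∞) : Set ℝ := if p = ∞ then Ici 0 else Ioi (-1 / p.toReal)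

/-- `W_p^{α,β}`. -/
def WSet (p : ℝ≥0∞) (α β : ℝ) : Set (ℝ → ℝ) :=
  {f | Measurable f ∧ LpOn (fun x => jacobi α β x * f x) p (-1) 1 ≠ ⊤}

/-- `B_p^{α,β}`, the unit sphere of `W_p^{α,β}`. -/
def BSet (p : ℝ≥0∞) (α β : ℝ) : Set (ℝ → ℝ) :=
  {f | Measurable f ∧ LpOn (fun x => jacobi α β x * f x) p (-1) 1 = 1}

/-- Best weighted approximation `E_n(f)_{w,q}` by polynomials of degree at most `n`. -/
def En (n : ℕ) (f : ℝ → ℝ) (wt : ℝ → ℝ) (q : ℝ≥0∞) : ℝ≥0∞ :=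
  ⨅ P ∈ {P : Polynomial ℝ | P.natDegree ≤ n},
    LpOn (fun x => wt x * (f x - P.eval x)) q (-1) 1

/-- `E(X, P_n)_{w,q}`. -/
def EClass (X : Set (ℝ → ℝ)) (n : ℕ) (wt : ℝ → ℝ) (q : ℝ≥0∞) : ℝ≥0∞ :=
  ⨆ f ∈ X, En n f wt q


/-- divided difference over a finset -/
def dd (s : Finset ℝ) (g : ℝ → ℝ) : ℝ := ∑ a ∈ s, g a / ∏ b ∈ s.erase a, (a - b)

lemma kmono_iff (k : ℕ) (f : ℝ → ℝ) : kMonotoneOn k f ↔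
    ∀ s : Finset ℝ, s.card = k + 1 → (∀ a ∈ s, a ∈ Ioo (-1 : ℝ) 1) → 0 ≤ dd s f := by
  constructor
  · intro h s hs hI
    have := h (fun i => (s.orderEmbOfFin hs i)) (s.orderEmbOfFin hs).injective
      (fun i => hI _ (Finset.orderEmbOfFin_mem s hs i))
    convert this using 1
    have e : s = Finset.univ.map (s.orderEmbOfFin hs).toEmbedding := by simp
    unfold dd
    conv_lhs => rw [e]
    rw [Finset.sum_map]
    refine Finset.sum_congr rfl fun i _ => ?_
    congr 1
    rw [← Finset.map_erase, Finset.prod_map]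
    rfl
  · intro h x hx hI
    have := h (Finset.univ.map ⟨x, hx⟩) (by simp) (by simpa using hI)
    convert this using 1
    unfold dd
    rw [Finset.sum_map]
    refine Finset.sum_congr rfl fun i _ => ?_
    congr 1
    rw [← Finset.map_erase, Finset.prod_map]
    rfl

lemma dd_congr {s : Finset ℝ} {f g : ℝ → ℝ} (h : ∀ a ∈ s, f a = g a) : dd s f = dd s g := by
  unfold dd
  exact Finset.sum_congr rfl fun a ha => by rw [h a ha]

lemma dd_zero {s : Finset ℝ} {g : ℝ → ℝ} (h : ∀ a ∈ s, g a = 0) : dd s g = 0 := by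
  unfold dd
  exact Finset.sum_eq_zero fun a ha => by rw [h a ha]; simp

lemma dd_add (s : Finset ℝ) (f g : ℝ → ℝ) : dd s (fun x => f x + g x) = dd s f + dd s g := by
  unfold dd
  rw [← Finset.sum_add_distrib]
  exact Finset.sum_congr rfl fun a ha => by ring

lemma dd_smul (s : Finset ℝ) (c : ℝ) (f : ℝ → ℝ) : dd s (fun x => c * f x) = c * dd s f := by
  unfold dd
  rw [Finset.mul_sum]
  exact Finset.sum_congr rfl fun a ha => by ring

lemma dd_sub (s : Finset ℝ) (f g : ℝ → ℝ) : dd s (fun x => f x - g x) = dd s f - dd s g := by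
  unfold dd
  rw [← Finset.sum_sub_distrib]
  exact Finset.sum_congr rfl fun a ha => by ring

lemma dd_poly (s : Finset ℝ) (k : ℕ) (hs : s.card = k + 1) (P : Polynomial ℝ) (hP : P.degree < k) :
    dd s (fun x => P.eval x) = 0 := by
  have := Lagrange.coeff_eq_sum (s := s) (v := id) (fun _ _ _ _ h => h) (P := P)
    (hP.trans (by rw [hs]; exact_mod_cast Nat.lt_succ_self k))
  unfold dd
  simp only [id] at this
  rw [← this, hs]
  exact Polynomial.coeff_eq_zero_of_degree_lt (by simpa using hP)

lemma dd_erase (X : Finset ℝ) (c : ℝ) (hc : c ∈ X) (g : ℝ → ℝ) :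
    dd (X.erase c) g = dd X (fun y => (y - c) * g y) := by
  unfold dd
  rw [← Finset.sum_erase X (a := c) (f := fun a => (fun y => (y - c) * g y) a / ∏ b ∈ X.erase a, (a - b)) (by simp)]
  refine Finset.sum_congr rfl fun y hy => ?_
  have hyc : y ≠ c := Finset.ne_of_mem_erase hy
  have hy' : c ∈ X.erase y := Finset.mem_erase.2 ⟨hyc.symm, hc⟩
  rw [← Finset.mul_prod_erase (X.erase y) _ hy', Finset.erase_right_comm]
  rw [mul_div_mul_left _ _ (sub_ne_zero.2 hyc)]

lemma dd_affine (X : Finset ℝ) (a b c : ℝ) (ha : a ∈ X) (hb : b ∈ X) (hc : c ∈ X) (g : ℝ → ℝ) :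
    (b - a) * dd (X.erase c) g = (b - c) * dd (X.erase a) g + (c - a) * dd (X.erase b) g := by
  rw [dd_erase X a ha, dd_erase X b hb, dd_erase X c hc, ← dd_smul, ← dd_smul, ← dd_smul, ← dd_add]
  exact dd_congr fun y _ => by ring

lemma dd_windows (Z : Finset ℝ) (k : ℕ) (g : ℝ → ℝ)
    (h : ∀ T ⊆ Z, T.card = k + 1 → (∀ z ∈ Z, ∀ a ∈ T, ∀ b ∈ T, a < z → z < b → z ∈ T) → 0 ≤ dd T g) :
    ∀ n : ℕ, ∀ T ⊆ Z, T.card = k + 1 →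
      (Z.filter (fun z => z ∉ T ∧ (∃ a ∈ T, a < z) ∧ (∃ b ∈ T, z < b))).card = n → 0 ≤ dd T g := by
  intro n
  induction n using Nat.strong_induction_on with
  | _ n ih =>
  intro T hT hTc hn
  by_cases hw : ∀ z ∈ Z, ∀ a ∈ T, ∀ b ∈ T, a < z → z < b → z ∈ T
  · exact h T hT hTc hw
  push Not at hw
  obtain ⟨c, hcZ, a', ha', b', hb', hac, hcb, hcT⟩ := hw
  have hne : T.Nonempty := ⟨a', ha'⟩
  obtain ⟨a, ha, hamin⟩ : ∃ a ∈ T, ∀ t ∈ T, a ≤ t :=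
    ⟨T.min' hne, T.min'_mem hne, fun t ht => T.min'_le t ht⟩
  obtain ⟨b, hb, hbmax⟩ : ∃ b ∈ T, ∀ t ∈ T, t ≤ b :=
    ⟨T.max' hne, T.max'_mem hne, fun t ht => T.le_max' t ht⟩
  have hac2 : a < c := lt_of_le_of_lt (hamin _ ha') hac
  have hcb2 : c < b := lt_of_lt_of_le hcb (hbmax _ hb')
  have key := dd_affine (insert c T) a b c (by simp [ha]) (by simp [hb]) (by simp) g
  rw [Finset.erase_insert hcT] at key
  have hXa : 0 ≤ dd ((insert c T).erase a) g := by
    refine ih _ ?_ ((insert c T).erase a) ?_ ?_ rfl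
    · rw [← hn]
      apply Finset.card_lt_card
      refine ⟨?_, ?_⟩
      · intro z hz
        simp only [Finset.mem_filter, Finset.mem_erase, Finset.mem_insert, not_and, not_or] at hz ⊢
        obtain ⟨hz1, hz2, ⟨u, ⟨hu1, hu2⟩, hu⟩, ⟨v, ⟨hv1, hv2⟩, hv⟩⟩ := hz
        have hau : a ≤ u := by rcases hu2 with rfl | h; exacts [hac2.le, hamin _ h]
        have hvb : v ≤ b := by rcases hv2 with rfl | h; exacts [hcb2.le, hbmax _ h]
        have hza : z ≠ a := by rintro rfl; linarith
        exact ⟨hz1, (hz2 hza).2, ⟨a, ha, by linarith⟩, ⟨b, hb, by linarith⟩⟩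
      · intro hsub
        have := hsub (Finset.mem_filter.2 ⟨hcZ, hcT, ⟨a, ha, hac2⟩, ⟨b, hb, hcb2⟩⟩)
        simp [hac2.ne'] at this
    · exact (Finset.erase_subset _ _).trans (Finset.insert_subset hcZ hT)
    · rw [Finset.card_erase_of_mem (by simp [ha]), Finset.card_insert_of_notMem hcT, hTc]; rfl
  have hXb : 0 ≤ dd ((insert c T).erase b) g := by
    refine ih _ ?_ ((insert c T).erase b) ?_ ?_ rfl
    · rw [← hn]
      apply Finset.card_lt_card
      refine ⟨?_, ?_⟩
      · intro z hz
        simp only [Finset.mem_filter, Finset.mem_erase, Finset.mem_insert, not_and, not_or] at hz ⊢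
        obtain ⟨hz1, hz2, ⟨u, ⟨hu1, hu2⟩, hu⟩, ⟨v, ⟨hv1, hv2⟩, hv⟩⟩ := hz
        have hau : a ≤ u := by rcases hu2 with rfl | h; exacts [hac2.le, hamin _ h]
        have hvb : v ≤ b := by rcases hv2 with rfl | h; exacts [hcb2.le, hbmax _ h]
        have hza : z ≠ b := by rintro rfl; linarith
        exact ⟨hz1, (hz2 hza).2, ⟨a, ha, by linarith⟩, ⟨b, hb, by linarith⟩⟩
      · intro hsub
        have := hsub (Finset.mem_filter.2 ⟨hcZ, hcT, ⟨a, ha, hac2⟩, ⟨b, hb, hcb2⟩⟩)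
        simp [hcb2.ne] at this
    · exact (Finset.erase_subset _ _).trans (Finset.insert_subset hcZ hT)
    · rw [Finset.card_erase_of_mem (by simp [hb]), Finset.card_insert_of_notMem hcT, hTc]; rfl
  have : 0 ≤ (b - a) * dd T g := by
    rw [key]
    have h1 : 0 ≤ b - c := by linarith
    have h2 : 0 ≤ c - a := by linarith
    positivity
  exact nonneg_of_mul_nonneg_right this (by linarith)

/-- positive and nonpositive truncations -/
def trP (f : ℝ → ℝ) (x : ℝ) : ℝ := if 0 < x then f x else 0
def trM (f : ℝ → ℝ) (x : ℝ) : ℝ := if 0 < x then 0 else f x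

lemma trP_add_trM (f : ℝ → ℝ) (x : ℝ) : trP f x + trM f x = f x := by
  unfold trP trM; split_ifs <;> simp

lemma trunc_dd (k : ℕ) (f : ℝ → ℝ) (hf : kMonotoneOn k f) (τ : Finset ℝ) (hτ : τ.card = k)
    (hτI : ∀ t ∈ τ, t ∈ Ioc (-1 : ℝ) 0) (hfτ : ∀ t ∈ τ, f t = 0)
    (Y : Finset ℝ) (hY : Y.card = k + 1) (hYI : ∀ y ∈ Y, y ∈ Ioo (-1 : ℝ) 1)
    (hsep : ∀ y ∈ Y, y ∈ τ ∨ 0 < y ∨ ∀ t ∈ τ, y < t) (h0 : k ≠ 0) :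
    0 ≤ dd Y (trP f) ∧ 0 ≤ dd Y (trM f) := by
  rw [kmono_iff] at hf
  have hτne : τ.Nonempty := by rw [← Finset.card_pos]; omega
  have hZI : ∀ y ∈ Y ∪ τ, y ∈ Ioo (-1 : ℝ) 1 := by
    intro y hy
    rcases Finset.mem_union.1 hy with h | h
    · exact hYI y h
    · exact ⟨(hτI y h).1, by linarith [(hτI y h).2]⟩
  have key : ∀ T ⊆ Y ∪ τ, T.card = k + 1 →
      (∀ z ∈ Y ∪ τ, ∀ a ∈ T, ∀ b ∈ T, a < z → z < b → z ∈ T) →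
      0 ≤ dd T (trP f) ∧ 0 ≤ dd T (trM f) := by
    intro T hT hTc hw
    have hTf : 0 ≤ dd T f := hf T hTc fun a ha => hZI a (hT ha)
    by_cases hb : ∃ b ∈ T, 0 < b
    · obtain ⟨b, hb, hb0⟩ := hb
      have hTT : ∀ y ∈ T, y ∈ τ ∨ 0 < y := by
        intro y hy
        by_contra hcon
        push Not at hcon
        have hyt : ∀ t ∈ τ, y < t := by
          rcases Finset.mem_union.1 (hT hy) with h | h
          · rcases hsep y h with h | h | h
            · exact absurd h hcon.1
            · exact absurd h (not_lt.2 hcon.2)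
            · exact h
          · exact absurd h hcon.1
        have hsub : insert y (insert b τ) ⊆ T := by
          intro z hz
          simp only [Finset.mem_insert] at hz
          rcases hz with rfl | rfl | hz
          · exact hy
          · exact hb
          · exact hw z (Finset.mem_union_right _ hz) y hy b hb (hyt z hz)
              (by linarith [(hτI z hz).2])
        have hbτ : b ∉ τ := fun h => by linarith [(hτI b h).2]
        have hyb : y ∉ insert b τ := by
          simp only [Finset.mem_insert, not_or]
          exact ⟨by intro h; rw [h] at hcon; linarith [hcon.2], hcon.1⟩
        have := Finset.card_le_card hsub
        rw [Finset.card_insert_of_notMem hyb, Finset.card_insert_of_notMem hbτ] at this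
        omega
      constructor
      · rw [dd_congr (g := f)]; exact hTf
        intro y hy
        unfold trP; split_ifs with h
        · rfl
        · rcases hTT y hy with h' | h'
          · rw [hfτ y h']
          · exact absurd h' h
      · rw [dd_zero]
        intro y hy
        unfold trM; split_ifs with h
        · rfl
        · rcases hTT y hy with h' | h'
          · rw [hfτ y h']
          · exact absurd h' h
    · push Not at hb
      constructor
      · rw [dd_zero]
        intro y hy
        unfold trP; rw [if_neg (not_lt.2 (hb y hy))]
      · rw [dd_congr (g := f)]; exact hTf
        intro y hy
        unfold trM; rw [if_neg (not_lt.2 (hb y hy))]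
  constructor
  · exact dd_windows (Y ∪ τ) k _ (fun T h1 h2 h3 => (key T h1 h2 h3).1) _ Y
      Finset.subset_union_left hY rfl
  · exact dd_windows (Y ∪ τ) k _ (fun T h1 h2 h3 => (key T h1 h2 h3).2) _ Y
      Finset.subset_union_left hY rfl

/-- sandwich -/
lemma sandwich (k : ℕ) (f : ℝ → ℝ) (P : Polynomial ℝ) (hP : P.degree < k)
    (x : ℝ) (hx : 0 < x) (N : Finset ℝ) (hN : N.card = k) (hNn : ∀ y ∈ N, y < 0)
    (h1 : 0 ≤ dd (insert x N) (trP (fun y => f y - P.eval y)))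
    (h2 : 0 ≤ dd (insert x N) (trM (fun y => f y - P.eval y))) :
    0 ≤ f x - P.eval x ∧ f x - P.eval x ≤ dd (insert x N) f * ∏ b ∈ N, (x - b) := by
  have hxN : x ∉ N := fun h => by linarith [hNn x h]
  have hpos : 0 < ∏ b ∈ N, (x - b) := Finset.prod_pos fun b hb => by linarith [hNn b hb]
  have e1 : dd (insert x N) (trP (fun y => f y - P.eval y)) =
      (f x - P.eval x) / ∏ b ∈ N, (x - b) := by
    unfold dd
    rw [Finset.sum_insert hxN, Finset.erase_insert hxN, Finset.sum_eq_zero, add_zero]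
    · simp [trP, hx]
    · intro y hy
      simp [trP, not_lt.2 (hNn y hy).le]
  have e2 : dd (insert x N) (trP (fun y => f y - P.eval y)) +
      dd (insert x N) (trM (fun y => f y - P.eval y)) = dd (insert x N) f := by
    rw [← dd_add]
    simp only [trP_add_trM]
    rw [dd_sub, dd_poly _ k (by rw [Finset.card_insert_of_notMem hxN, hN]) P hP, sub_zero]
  rw [e1] at h1 e2
  have e3 : f x - P.eval x = ((f x - P.eval x) / ∏ b ∈ N, (x - b)) * ∏ b ∈ N, (x - b) := by
    field_simp
  constructor
  · rw [e3]; positivity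
  · rw [e3]; gcongr; linarith

lemma kmono_sub_poly (k : ℕ) (f : ℝ → ℝ) (hf : kMonotoneOn k f) (P : Polynomial ℝ)
    (hP : P.degree < k) : kMonotoneOn k (fun y => f y - P.eval y) := by
  rw [kmono_iff] at hf ⊢
  intro s hs hI
  rw [dd_sub, dd_poly s k hs P hP, sub_zero]
  exact hf s hs hI

lemma exists_poly (k : ℕ) (hk : 1 ≤ k) (f : ℝ → ℝ) (hf : kMonotoneOn k f) :
    ∃ P : Polynomial ℝ, P.degree < k ∧ P.eval 0 = f 0 ∧
      kMonotoneOn k (trP (fun y => f y - P.eval y)) ∧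
      kMonotoneOn k (trM (fun y => f y - P.eval y)) := by
  classical
  set τ : ℕ → Finset ℝ := fun n => (Finset.range k).image (fun j : ℕ => -(j : ℝ) / (n + k + 1)) with hτdef
  have hτc : ∀ n, (τ n).card = k := by
    intro n
    rw [hτdef]
    simp only
    rw [Finset.card_image_of_injective, Finset.card_range]
    intro a b hab
    have h0 : (n + k + 1 : ℝ) ≠ 0 := by positivity
    simp only at hab
    rw [div_left_inj' h0] at hab
    exact_mod_cast neg_injective hab
  have hτm : ∀ n, ∀ t ∈ τ n, t ≤ 0 ∧ -(k : ℝ) / (n + k + 1) ≤ t := by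
    intro n t ht
    rw [hτdef] at ht
    simp only [Finset.mem_image, Finset.mem_range] at ht
    obtain ⟨j, hj, rfl⟩ := ht
    have hj' : (j : ℝ) ≤ k := by exact_mod_cast hj.le
    constructor
    · rw [neg_div]
      have : 0 ≤ (j : ℝ) / (n + k + 1) := by positivity
      linarith
    · gcongr
  have hτI : ∀ n, ∀ t ∈ τ n, t ∈ Ioc (-1 : ℝ) 0 := by
    intro n t ht
    obtain ⟨h1, h2⟩ := hτm n t ht
    refine ⟨lt_of_lt_of_le ?_ h2, h1⟩
    rw [neg_div, neg_lt_neg_iff, div_lt_one (by positivity)]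
    have : (0 : ℝ) ≤ n := by positivity
    linarith
  have hτ0 : ∀ n, (0 : ℝ) ∈ τ n := by
    intro n
    rw [hτdef]
    simp only [Finset.mem_image, Finset.mem_range]
    exact ⟨0, hk, by simp⟩
  have hinj : ∀ n, Set.InjOn (id : ℝ → ℝ) (τ n : Set ℝ) := fun n _ _ _ _ h => h
  set Pn : ℕ → Polynomial ℝ := fun n => Lagrange.interpolate (τ n) id f with hPn
  have hPd : ∀ n, (Pn n).degree < k := by
    intro n
    have := Lagrange.degree_interpolate_lt (r := f) (hinj n)
    rwa [hτc n] at this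
  have hPe : ∀ n, ∀ t ∈ τ n, (Pn n).eval t = f t := by
    intro n t ht
    exact Lagrange.eval_interpolate_at_node (r := f) (hinj n) ht
  have hlim : Tendsto (fun n : ℕ => -(k : ℝ) / (n + k + 1)) atTop (nhds 0) := by
    apply Tendsto.div_atTop tendsto_const_nhds
    simp only [add_assoc]
    exact tendsto_atTop_add_const_right _ _ tendsto_natCast_atTop_atTop
  have hev : ∀ Y : Finset ℝ, Y.card = k + 1 → (∀ y ∈ Y, y ∈ Ioo (-1 : ℝ) 1) →
      ∀ᶠ n in atTop, 0 ≤ dd Y (trP (fun y => f y - (Pn n).eval y)) ∧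
        0 ≤ dd Y (trM (fun y => f y - (Pn n).eval y)) := by
    intro Y hY hYI
    have hsep : ∀ᶠ n in atTop, ∀ y ∈ Y, y ∈ τ n ∨ 0 < y ∨ ∀ t ∈ τ n, y < t := by
      rw [Filter.eventually_all_finset]
      intro y hy
      rcases lt_trichotomy y 0 with h | h | h
      · filter_upwards [hlim.eventually_const_lt h] with n hn
        exact Or.inr (Or.inr fun t ht => lt_of_lt_of_le hn (hτm n t ht).2)
      · subst h
        exact Eventually.of_forall fun n => Or.inl (hτ0 n)
      · exact Eventually.of_forall fun n => Or.inr (Or.inl h)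
    filter_upwards [hsep] with n hn
    exact trunc_dd k _ (kmono_sub_poly k f hf _ (hPd n)) (τ n) (hτc n) (hτI n)
      (fun t ht => by rw [hPe n t ht, sub_self]) Y hY hYI hn (by omega)
  set xs : Fin k → ℝ := fun i => ((i : ℕ) + 1 : ℝ) / (k + 1) with hxs
  have hxinj : Set.InjOn xs ((Finset.univ : Finset (Fin k)) : Set (Fin k)) := by
    intro a _ b _ hab
    have h0 : (k + 1 : ℝ) ≠ 0 := by positivity
    rw [hxs] at hab
    simp only at hab
    rw [div_left_inj' h0, add_left_inj] at hab
    exact Fin.ext (by exact_mod_cast hab)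
  have hxI : ∀ i, 0 < xs i ∧ xs i < 1 := by
    intro i
    constructor
    · rw [hxs]; positivity
    · rw [hxs]
      simp only
      rw [div_lt_one (by positivity), add_lt_add_iff_right]
      exact_mod_cast i.2
  set N : Finset ℝ := Finset.univ.image (fun i => - xs i) with hN
  have hNc : N.card = k := by
    rw [hN, Finset.card_image_of_injective]
    · simp
    · intro a b hab
      exact hxinj (by simp) (by simp) (neg_injective hab)
  have hNn : ∀ y ∈ N, y < 0 ∧ -1 < y := by
    intro y hy
    rw [hN] at hy
    simp only [Finset.mem_image, Finset.mem_univ, true_and] at hy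
    obtain ⟨i, rfl⟩ := hy
    have := hxI i
    constructor <;> linarith
  set V : ℕ → Fin k → ℝ := fun n i => (Pn n).eval (xs i) with hV
  have hbox : ∀ᶠ n in atTop, V n ∈ Set.pi Set.univ (fun i : Fin k =>
      Icc (f (xs i) - dd (insert (xs i) N) f * ∏ b ∈ N, (xs i - b)) (f (xs i))) := by
    simp only [Set.mem_pi, Set.mem_univ, true_imp_iff]
    rw [Filter.eventually_all]
    intro i
    have hiN : xs i ∉ N := fun h => by linarith [(hNn _ h).1, (hxI i).1]
    have := hev (insert (xs i) N) (by rw [Finset.card_insert_of_notMem hiN, hNc]) (by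
      intro y hy
      rcases Finset.mem_insert.1 hy with rfl | hy
      · exact ⟨by linarith [(hxI i).1], (hxI i).2⟩
      · exact ⟨(hNn y hy).2, by linarith [(hNn y hy).1]⟩)
    filter_upwards [this] with n hn
    have := sandwich k f (Pn n) (hPd n) (xs i) (hxI i).1 N hNc (fun y hy => (hNn y hy).1) hn.1 hn.2
    constructor
    · simp only [hV]; linarith [this.2]
    · simp only [hV]; linarith [this.1]
  obtain ⟨v, -, φ, hφ, hconv⟩ := (isCompact_univ_pi fun i : Fin k => isCompact_Icc).tendsto_subseq'
    hbox.frequently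
  set P : Polynomial ℝ := Lagrange.interpolate Finset.univ xs v with hPdef
  have hPlim : ∀ y, Tendsto (fun n => (Pn (φ n)).eval y) atTop (nhds (P.eval y)) := by
    intro y
    have e : ∀ n, (Pn n) = Lagrange.interpolate Finset.univ xs (V n) := by
      intro n
      exact Lagrange.eq_interpolate hxinj (by simpa using hPd n)
    simp only [e, hPdef, Lagrange.interpolate_apply, Polynomial.eval_finsetSum, Polynomial.eval_mul,
      Polynomial.eval_C]
    refine tendsto_finsetSum _ fun i _ => ?_
    exact Tendsto.mul_const _ ((tendsto_pi_nhds.1 hconv) i)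
  refine ⟨P, ?_, ?_, ?_, ?_⟩
  · have := Lagrange.degree_interpolate_lt (r := v) hxinj
    rwa [Finset.card_univ, Fintype.card_fin] at this
  · refine tendsto_nhds_unique (hPlim 0) ?_
    simp only [hPe _ 0 (hτ0 _)]
    exact tendsto_const_nhds
  · rw [kmono_iff]
    intro Y hY hYI
    have ht : Tendsto (fun n => dd Y (trP (fun y => f y - (Pn (φ n)).eval y))) atTop
        (nhds (dd Y (trP (fun y => f y - P.eval y)))) := by
      unfold dd
      refine tendsto_finsetSum _ fun a _ => ?_
      refine Tendsto.div_const ?_ _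
      unfold trP
      split_ifs
      · exact tendsto_const_nhds.sub (hPlim a)
      · exact tendsto_const_nhds
    refine ge_of_tendsto ht ?_
    exact (hφ.tendsto_atTop.eventually (hev Y hY hYI)).mono fun n h => h.1
  · rw [kmono_iff]
    intro Y hY hYI
    have ht : Tendsto (fun n => dd Y (trM (fun y => f y - (Pn (φ n)).eval y))) atTop
        (nhds (dd Y (trM (fun y => f y - P.eval y)))) := by
      unfold dd
      refine tendsto_finsetSum _ fun a _ => ?_
      refine Tendsto.div_const ?_ _
      unfold trM
      split_ifs
      · exact tendsto_const_nhds
      · exact tendsto_const_nhds.sub (hPlim a)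
    refine ge_of_tendsto ht ?_
    exact (hφ.tendsto_atTop.eventually (hev Y hY hYI)).mono fun n h => h.2

lemma bound1 (k : ℕ) (hk : 1 ≤ k) (f : ℝ → ℝ) (P : Polynomial ℝ) (hP : P.degree < k)
    (h1 : kMonotoneOn k (trP (fun y => f y - P.eval y)))
    (h2 : kMonotoneOn k (trM (fun y => f y - P.eval y)))
    (x : ℝ) (hx : 0 < x) (hx1 : 2 * k * x < 1) :
    |P.eval x| ≤ 2 * (k : ℝ) ^ k * ∑ j ∈ Finset.range (k + 1), |f ((1 - 2 * (j : ℝ)) * x)| := by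
  classical
  rw [kmono_iff] at h1 h2
  have hk1 : (1 : ℝ) ≤ k := by exact_mod_cast hk
  have hinj : Function.Injective (fun j : ℕ => (1 - 2 * (j : ℝ)) * x) := by
    intro a b hab
    have := mul_right_cancel₀ hx.ne' hab
    have : (a : ℝ) = b := by linarith
    exact_mod_cast this
  set N : Finset ℝ := (Finset.range k).image (fun j : ℕ => (1 - 2 * ((j + 1 : ℕ) : ℝ)) * x) with hN
  have hNc : N.card = k := by
    rw [hN, Finset.card_image_of_injective, Finset.card_range]
    intro a b hab
    have := hinj hab
    omega
  have hNm : ∀ y ∈ N, y ≤ -x ∧ x - 2 * k * x ≤ y := by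
    intro y hy
    rw [hN] at hy
    simp only [Finset.mem_image, Finset.mem_range] at hy
    obtain ⟨j, hj, rfl⟩ := hy
    have hj' : ((j + 1 : ℕ) : ℝ) ≤ k := by exact_mod_cast hj
    have hj'' : (1 : ℝ) ≤ ((j + 1 : ℕ) : ℝ) := by exact_mod_cast Nat.le_add_left 1 j
    constructor <;> nlinarith
  set Y : Finset ℝ := (Finset.range (k + 1)).image (fun j : ℕ => (1 - 2 * (j : ℝ)) * x) with hY
  have hYN : insert x N = Y := by
    rw [hY, Finset.range_add_one', Finset.image_insert, hN, Finset.map_eq_image, Finset.image_image]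
    congr 1
    simp
  have hxN : x ∉ N := fun h => by linarith [(hNm x h).1]
  have hYc : Y.card = k + 1 := by rw [← hYN, Finset.card_insert_of_notMem hxN, hNc]
  have hYI : ∀ y ∈ Y, y ∈ Ioo (-1 : ℝ) 1 := by
    intro y hy
    rw [← hYN] at hy
    rcases Finset.mem_insert.1 hy with rfl | hy
    · constructor <;> nlinarith
    · have := hNm y hy
      constructor <;> linarith
  have hs := sandwich k f P hP x hx N hNc (fun y hy => by linarith [(hNm y hy).1])
    (by rw [hYN]; exact h1 Y hYc hYI) (by rw [hYN]; exact h2 Y hYc hYI)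
  rw [hYN] at hs
  set S := ∑ j ∈ Finset.range (k + 1), |f ((1 - 2 * (j : ℝ)) * x)| with hS
  have hSY : ∑ a ∈ Y, |f a| = S := by
    rw [hY, Finset.sum_image (fun a _ b _ h => hinj h)]
  have hdd : |dd Y f| ≤ S / (2 * x) ^ k := by
    unfold dd
    refine (Finset.abs_sum_le_sum_abs _ _).trans ?_
    rw [← hSY, Finset.sum_div]
    refine Finset.sum_le_sum fun a ha => ?_
    rw [abs_div]
    gcongr
    rw [Finset.abs_prod]
    have hc : (Y.erase a).card = k := by rw [Finset.card_erase_of_mem ha, hYc]; rfl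
    rw [← hc, ← Finset.prod_const]
    refine Finset.prod_le_prod (fun _ _ => by positivity) fun b hb => ?_
    obtain ⟨hba, hb2⟩ := Finset.mem_erase.1 hb
    clear hb
    rw [hY] at ha hb2
    simp only [Finset.mem_image, Finset.mem_range] at ha hb2
    obtain ⟨i, _, rfl⟩ := ha
    obtain ⟨j, _, rfl⟩ := hb2
    have hij : (i : ℤ) - j ≠ 0 := by
      intro h
      apply hba
      have : i = j := by omega
      rw [this]
    have h1 : (1 : ℝ) ≤ |(i : ℝ) - j| := by exact_mod_cast Int.one_le_abs hij
    have : (1 - 2 * (i : ℝ)) * x - (1 - 2 * (j : ℝ)) * x = -(((i : ℝ) - j) * (2 * x)) := by ring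
    rw [this, abs_neg, abs_mul, abs_of_pos (by positivity : 0 < 2 * x)]
    have : 0 < 2 * x := by positivity
    nlinarith
  have hprod : |∏ b ∈ N, (x - b)| ≤ (k * (2 * x)) ^ k := by
    rw [Finset.abs_prod]
    conv_rhs => rw [← hNc, ← Finset.prod_const, hNc]
    refine Finset.prod_le_prod (fun _ _ => by positivity) fun b hb => ?_
    have := hNm b hb
    rw [abs_of_nonneg (by linarith)]
    linarith
  have hm : |dd Y f * ∏ b ∈ N, (x - b)| ≤ (k : ℝ) ^ k * S := by
    rw [abs_mul]
    calc _ ≤ (S / (2 * x) ^ k) * (k * (2 * x)) ^ k := by gcongr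
      _ = _ := by
        have h0 : (2 * x) ^ k ≠ 0 := by positivity
        rw [mul_pow (k : ℝ) (2 * x)]
        generalize (2 * x) ^ k = A at h0
        field_simp
  have hfx : |f x| ≤ S := by
    rw [← hSY]
    exact Finset.single_le_sum (f := fun a => |f a|) (fun _ _ => abs_nonneg _)
      (by rw [← hYN]; simp)
  have hS0 : 0 ≤ S := (abs_nonneg _).trans hfx
  have hkk : (1 : ℝ) ≤ (k : ℝ) ^ k := one_le_pow₀ hk1
  have : |P.eval x| ≤ |f x| + |dd Y f * ∏ b ∈ N, (x - b)| := by
    have a1 := neg_abs_le (f x)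
    have a2 := le_abs_self (f x)
    have a3 := le_abs_self (dd Y f * ∏ b ∈ N, (x - b))
    rw [abs_le]
    constructor <;> linarith [hs.1, hs.2, abs_nonneg (dd Y f * ∏ b ∈ N, (x - b))]
  nlinarith

lemma bound2 (k : ℕ) (hk : 1 ≤ k) : ∃ a : ℝ, 0 < a ∧ 2 * a * (2 * k * k) ≤ 1 / 2 ∧ ∃ C : ℝ, 0 < C ∧
    ∀ (f : ℝ → ℝ) (P : Polynomial ℝ), P.degree < k →
    kMonotoneOn k (trP (fun y => f y - P.eval y)) →
    kMonotoneOn k (trM (fun y => f y - P.eval y)) →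
    ∀ x ∈ Icc a (2 * a), ∀ y ∈ Icc (-1 : ℝ) 1,
    |P.eval y| ≤ C * ∑ i ∈ Finset.range k, ∑ j ∈ Finset.range (k + 1),
      |f ((1 - 2 * (j : ℝ)) * (((i : ℝ) + 1) * x))| := by
  have hk1 : (1 : ℝ) ≤ k := by exact_mod_cast hk
  have hk0 : (0 : ℝ) < k := by linarith
  refine ⟨1 / (8 * k * k), by positivity, by field_simp; norm_num,
    (16 * (k : ℝ) * k) ^ k * (2 * (k : ℝ) ^ k), by positivity, ?_⟩
  intro f P hP h1 h2 x hx y hy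
  have hxa : 1 ≤ x * (8 * k * k) := by
    have := hx.1
    rwa [div_le_iff₀ (by positivity)] at this
  have hxb : x * (8 * k * k) ≤ 2 := by
    have := hx.2
    rwa [mul_one_div, le_div_iff₀ (by positivity)] at this
  have hx0 : 0 < x := lt_of_lt_of_le (by positivity) hx.1
  have hinj : Set.InjOn (fun i : ℕ => ((i : ℝ) + 1) * x) (Finset.range k : Set ℕ) := by
    intro a _ b _ hab
    have := mul_right_cancel₀ hx0.ne' hab
    have : (a : ℝ) = b := by linarith
    exact_mod_cast this
  have hvm : ∀ i ∈ Finset.range k, (((i : ℝ) + 1) * x) * (4 * k) ≤ 1 := by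
    intro i hi
    have : (i : ℝ) + 1 ≤ k := by exact_mod_cast Finset.mem_range.1 hi
    calc (((i : ℝ) + 1) * x) * (4 * k) ≤ (k * x) * (4 * k) := by gcongr
      _ ≤ 1 := by linarith
  have e := Lagrange.eq_interpolate (f := P) hinj (by simpa using hP)
  have hb : ∀ i ∈ Finset.range k, |(Lagrange.basis (Finset.range k) (fun i : ℕ => ((i : ℝ) + 1) * x) i).eval y|
      ≤ (16 * (k : ℝ) * k) ^ k := by
    intro i hi
    unfold Lagrange.basis
    rw [Polynomial.eval_prod, Finset.abs_prod]
    have hB : (1 : ℝ) ≤ 16 * (k : ℝ) * k := by nlinarith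
    calc _ ≤ ∏ j ∈ (Finset.range k).erase i, (16 * (k : ℝ) * k) := by
          refine Finset.prod_le_prod (fun _ _ => abs_nonneg _) fun j hj => ?_
          obtain ⟨hji, hj⟩ := Finset.mem_erase.1 hj
          unfold Lagrange.basisDivisor
          simp only [Polynomial.eval_mul, Polynomial.eval_C, Polynomial.eval_sub, Polynomial.eval_X]
          have hij : (i : ℤ) - j ≠ 0 := by omega
          have h1 : (1 : ℝ) ≤ |(i : ℝ) - j| := by exact_mod_cast Int.one_le_abs hij
          have h2 : x ≤ |((i : ℝ) + 1) * x - ((j : ℝ) + 1) * x| := by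
            have : ((i : ℝ) + 1) * x - ((j : ℝ) + 1) * x = ((i : ℝ) - j) * x := by ring
            rw [this, abs_mul, abs_of_pos hx0]
            nlinarith
          have h3 : |y - ((j : ℝ) + 1) * x| ≤ 2 := by
            have h4 := hvm j hj
            have h5 : 0 ≤ ((j : ℝ) + 1) * x := by positivity
            have h6 : ((j : ℝ) + 1) * x ≤ 1 := by nlinarith
            rw [abs_le]
            constructor <;> linarith [hy.1, hy.2]
          rw [abs_mul, abs_inv]
          calc _ ≤ x⁻¹ * 2 := by gcongr
            _ ≤ _ := by
              rw [inv_mul_le_iff₀ hx0]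
              linarith
      _ = (16 * (k : ℝ) * k) ^ ((Finset.range k).erase i).card := by rw [Finset.prod_const]
      _ ≤ _ := by
          apply pow_le_pow_right₀ hB
          have := Finset.card_erase_le (s := Finset.range k) (a := i)
          simpa using this
  rw [e]
  simp only [Lagrange.interpolate_apply, Polynomial.eval_finsetSum, Polynomial.eval_mul,
      Polynomial.eval_C]
  refine (Finset.abs_sum_le_sum_abs _ _).trans ?_
  rw [Finset.mul_sum]
  refine Finset.sum_le_sum fun i hi => ?_
  rw [abs_mul]
  have := bound1 k hk f P hP h1 h2 (((i : ℝ) + 1) * x) (by positivity) (by nlinarith [hvm i hi])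
  calc _ ≤ (2 * (k : ℝ) ^ k * ∑ j ∈ Finset.range (k + 1), |f ((1 - 2 * (j : ℝ)) * (((i : ℝ) + 1) * x))|)
        * (16 * (k : ℝ) * k) ^ k := mul_le_mul this (hb i hi) (abs_nonneg _) (by positivity)
    _ = _ := by ring

/-- reflection -/
def jrefl (k : ℕ) (f : ℝ → ℝ) (x : ℝ) : ℝ := (-1) ^ k * f (-x)

lemma neg_one_pow_sq (k : ℕ) : ((-1 : ℝ) ^ k) * (-1) ^ k = 1 := by
  rw [← mul_pow]; simp

lemma jrefl_jrefl (k : ℕ) (f : ℝ → ℝ) : jrefl k (jrefl k f) = f := by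
  funext x
  unfold jrefl
  rw [← mul_assoc, neg_one_pow_sq, neg_neg, one_mul]

lemma jrefl_kmono (k : ℕ) (f : ℝ → ℝ) (hf : kMonotoneOn k f) : kMonotoneOn k (jrefl k f) := by
  rw [kmono_iff] at hf ⊢
  intro s hs hI
  have := hf (s.map (Equiv.neg ℝ).toEmbedding) (by simpa using hs) (by
    intro a ha
    simp only [Finset.mem_map] at ha
    obtain ⟨b, hb, rfl⟩ := ha
    have := hI b hb
    simp only [Equiv.coe_toEmbedding, Equiv.neg_apply, mem_Ioo]
    constructor <;> linarith [this.1, this.2])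
  convert this using 1
  unfold dd
  rw [Finset.sum_map]
  refine Finset.sum_congr rfl fun a ha => ?_
  rw [← Finset.map_erase, Finset.prod_map]
  simp only [Equiv.coe_toEmbedding, Equiv.neg_apply]
  have hc : (s.erase a).card = k := by rw [Finset.card_erase_of_mem ha, hs]; rfl
  have : ∏ x ∈ s.erase a, (-a - -x) = (-1) ^ k * ∏ x ∈ s.erase a, (a - x) := by
    rw [← hc, ← Finset.prod_const, ← Finset.prod_mul_distrib]
    exact Finset.prod_congr rfl fun x _ => by ring
  rw [this]
  unfold jrefl
  have h1 : ((-1 : ℝ) ^ k) ≠ 0 := by positivity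
  rw [← mul_div_mul_left (f (-a)) _ h1, ← mul_assoc, neg_one_pow_sq, one_mul]

lemma LpOn_neg (g : ℝ → ℝ) (p : ℝ≥0∞) (a b : ℝ) :
    LpOn (fun x => g (-x)) p a b = LpOn g p (-b) (-a) := by
  unfold LpOn
  have he : MeasurableEmbedding (fun x : ℝ => -x) := (MeasurableEquiv.neg ℝ).measurableEmbedding
  have h1 : volume.restrict (Icc (-b) (-a)) = Measure.map (fun x : ℝ => -x) (volume.restrict (Icc a b)) := by
    have : Icc a b = (fun x : ℝ => -x) ⁻¹' (Icc (-b) (-a)) := by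
      ext x; simp
    rw [this, ← he.restrict_map]
    congr 1
    exact (Measure.map_neg_eq_self (volume : Measure ℝ)).symm
  rw [h1, he.eLpNorm_map_measure]
  rfl

lemma LpOn_congr_abs {g h : ℝ → ℝ} (H : ∀ x, |g x| = |h x|) (p : ℝ≥0∞) (a b : ℝ) :
    LpOn g p a b = LpOn h p a b :=
  eLpNorm_congr_norm_ae (Eventually.of_forall fun x => by simpa using H x)

lemma jacobi_neg (α β x : ℝ) : jacobi α β (-x) = jacobi β α x := by
  unfold jacobi; rw [mul_comm]; congr 2; ring

lemma symmDelta_refl (k : ℕ) (h : ℝ) (f : ℝ → ℝ) (x : ℝ) :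
    symmDelta k h (jrefl k f) x = symmDelta k h f (-x) := by
  unfold symmDelta
  have hc : (x - k * h / 2 ∈ Icc (-1 : ℝ) 1 ∧ x + k * h / 2 ∈ Icc (-1 : ℝ) 1) ↔
      (-x - k * h / 2 ∈ Icc (-1 : ℝ) 1 ∧ -x + k * h / 2 ∈ Icc (-1 : ℝ) 1) := by
    simp only [mem_Icc]
    constructor <;> rintro ⟨⟨a, b⟩, c, d⟩ <;> refine ⟨⟨?_, ?_⟩, ?_, ?_⟩ <;> linarith
  simp only [hc]
  congr 1
  rw [← Finset.sum_range_reflect]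
  refine Finset.sum_congr rfl fun i hi => ?_
  have hi : i ≤ k := Nat.lt_succ_iff.1 (Finset.mem_range.1 hi)
  rw [Nat.add_sub_cancel, Nat.choose_symm hi, Nat.sub_sub_self hi]
  unfold jrefl
  have h1 : (-1 : ℝ) ^ i * (-1) ^ k = (-1) ^ (k - i) := by
    obtain ⟨m, rfl⟩ := Nat.exists_eq_add_of_le hi
    rw [pow_add, ← mul_assoc, neg_one_pow_sq, one_mul]; congr 1; omega
  rw [← h1, Nat.cast_sub hi]
  have : -(x - k * h / 2 + (k - i : ℝ) * h) = -x - k * h / 2 + i * h := by ring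
  rw [this]; ring

lemma phiW_neg (x : ℝ) : phiW (-x) = phiW x := by unfold phiW; simp

lemma omegaDT_refl (k : ℕ) (f : ℝ → ℝ) (δ α β : ℝ) (q : ℝ≥0∞) :
    omegaDT k (jrefl k f) δ (jacobi β α) q = omegaDT k f δ (jacobi α β) q := by
  unfold omegaDT
  have h1 : OmegaMain k (jrefl k f) δ (jacobi β α) q = OmegaMain k f δ (jacobi α β) q := by
    unfold OmegaMain
    refine iSup_congr fun h => iSup_congr fun _ => ?_
    have := LpOn_neg (fun x => jacobi α β x * symmDelta k (h * phiW x) f x) q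
      (-1 + 2 * (k : ℝ) ^ 2 * h ^ 2) (1 - 2 * (k : ℝ) ^ 2 * h ^ 2)
    simp only [jacobi_neg, phiW_neg, ← symmDelta_refl] at this
    rw [this]; congr 1 <;> ring
  have h2 : OmegaFwd k (jrefl k f) δ (jacobi β α) q = OmegaBwd k f δ (jacobi α β) q := by
    unfold OmegaFwd OmegaBwd
    refine iSup_congr fun h => iSup_congr fun _ => ?_
    have := LpOn_neg (fun x => jacobi α β x * symmDelta k h f (x - k * h / 2)) q
      (-1) (-1 + 2 * (k : ℝ) ^ 2 * δ ^ 2)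
    have e : ∀ x : ℝ, -x - k * h / 2 = -(x + k * h / 2) := fun x => by ring
    simp only [jacobi_neg, e, ← symmDelta_refl] at this
    rw [this]; congr 1 <;> ring
  have h3 : OmegaBwd k (jrefl k f) δ (jacobi β α) q = OmegaFwd k f δ (jacobi α β) q := by
    unfold OmegaFwd OmegaBwd
    refine iSup_congr fun h => iSup_congr fun _ => ?_
    have := LpOn_neg (fun x => jacobi α β x * symmDelta k h f (x + k * h / 2)) q
      (1 - 2 * (k : ℝ) ^ 2 * δ ^ 2) 1
    have e : ∀ x : ℝ, -x + k * h / 2 = -(x - k * h / 2) := fun x => by ring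
    simp only [jacobi_neg, e, ← symmDelta_refl] at this
    rw [this]; congr 1; ring
  rw [h1, h2, h3, add_right_comm]

lemma measurable_refl (k : ℕ) {f : ℝ → ℝ} (hf : Measurable f) : Measurable (jrefl k f) := by
  unfold jrefl
  exact (hf.comp measurable_neg).const_mul _

lemma LpOn_refl (k : ℕ) (f : ℝ → ℝ) (α β : ℝ) (p : ℝ≥0∞) :
    LpOn (fun x => jacobi β α x * jrefl k f x) p (-1) 1 =
      LpOn (fun x => jacobi α β x * f x) p (-1) 1 := by
  have := LpOn_neg (fun x => jacobi α β x * f x) p (-1) 1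
  simp only [jacobi_neg, neg_neg] at this
  rw [← this]
  refine LpOn_congr_abs (fun x => ?_) _ _ _
  unfold jrefl
  rw [abs_mul, abs_mul, abs_mul, abs_pow]; simp

lemma measurable_jacobi (α β : ℝ) : Measurable (jacobi α β) := by
  unfold jacobi; fun_prop

lemma measurable_phiW : Measurable phiW := by
  unfold phiW; fun_prop

lemma measurable_symmDelta (k : ℕ) {f : ℝ → ℝ} (hf : Measurable f) {H X : ℝ → ℝ}
    (hH : Measurable H) (hX : Measurable X) : Measurable (fun x => symmDelta k (H x) f (X x)) := by
  unfold symmDelta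
  refine Measurable.ite ?_ ?_ measurable_const
  · refine MeasurableSet.inter ?_ ?_
    · exact measurableSet_Icc.preimage (f := fun x => X x - k * H x / 2) (by fun_prop)
    · exact measurableSet_Icc.preimage (f := fun x => X x + k * H x / 2) (by fun_prop)
  · refine Finset.measurable_sum _ fun i _ => ?_
    exact (hf.comp (by fun_prop)).const_mul _

lemma symmDelta_add (k : ℕ) (h : ℝ) (f g : ℝ → ℝ) (x : ℝ) :
    symmDelta k h (fun y => f y + g y) x = symmDelta k h f x + symmDelta k h g x := by
  unfold symmDelta
  split_ifs
  · rw [← Finset.sum_add_distrib]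
    exact Finset.sum_congr rfl fun i _ => by ring
  · simp

lemma symmDelta_smul (k : ℕ) (h c : ℝ) (f : ℝ → ℝ) (x : ℝ) :
    symmDelta k h (fun y => c * f y) x = c * symmDelta k h f x := by
  unfold symmDelta
  split_ifs
  · rw [Finset.mul_sum]
    exact Finset.sum_congr rfl fun i _ => by ring
  · simp

lemma symmDelta_poly (k : ℕ) (hk : 1 ≤ k) (h : ℝ) (P : Polynomial ℝ) (hP : P.degree < k) (x : ℝ) :
    symmDelta k h (fun y => P.eval y) x = 0 := by
  unfold symmDelta
  split_ifs
  swap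
  · rfl
  set Q : Polynomial ℝ := P.comp (Polynomial.C (x - k * h / 2) + Polynomial.C h * Polynomial.X) with hQ
  have hPn : P.natDegree < k := by
    by_cases h0 : P = 0
    · rw [h0, Polynomial.natDegree_zero]; omega
    · exact (Polynomial.natDegree_lt_iff_degree_lt h0).2 hP
  have hd : Q.natDegree < k := by
    have h1 : (Polynomial.C (x - k * h / 2) + Polynomial.C h * Polynomial.X).natDegree ≤ 1 := by
      rw [add_comm]; exact Polynomial.natDegree_linear_le
    calc Q.natDegree ≤ P.natDegree * _ := Polynomial.natDegree_comp_le
      _ ≤ P.natDegree * 1 := Nat.mul_le_mul_left _ h1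
      _ < k := by omega
  have := congrFun (Polynomial.fwdDiff_iter_eq_zero_of_degree_lt hd) 0
  rw [fwdDiff_iter_eq_sum_shift] at this
  simp only [Pi.zero_apply] at this
  rw [← this]
  refine Finset.sum_congr rfl fun i _ => ?_
  rw [hQ]
  simp
  rw [mul_comm h]
  ring

lemma omegaDT_add (k : ℕ) (δ α β : ℝ) (q : ℝ≥0∞) (hq : 1 ≤ q) {f g : ℝ → ℝ}
    (hf : Measurable f) (hg : Measurable g) :
    omegaDT k (fun x => f x + g x) δ (jacobi α β) q ≤
      omegaDT k f δ (jacobi α β) q + omegaDT k g δ (jacobi α β) q := by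
  have key : ∀ (H X : ℝ → ℝ) (_ : Measurable H) (_ : Measurable X) (a b : ℝ),
      LpOn (fun x => jacobi α β x * symmDelta k (H x) (fun x => f x + g x) (X x)) q a b ≤
      LpOn (fun x => jacobi α β x * symmDelta k (H x) f (X x)) q a b +
      LpOn (fun x => jacobi α β x * symmDelta k (H x) g (X x)) q a b := by
    intro H X hH hX a b
    simp only [symmDelta_add, mul_add]
    exact eLpNorm_add_le
      ((measurable_jacobi α β).mul (measurable_symmDelta k hf hH hX)).aestronglyMeasurable
      ((measurable_jacobi α β).mul (measurable_symmDelta k hg hH hX)).aestronglyMeasurable hq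
  have h1 : OmegaMain k (fun x => f x + g x) δ (jacobi α β) q ≤
      OmegaMain k f δ (jacobi α β) q + OmegaMain k g δ (jacobi α β) q := by
    unfold OmegaMain
    refine iSup₂_le fun h hh => ?_
    refine (key (fun x => h * phiW x) id (measurable_phiW.const_mul h) measurable_id _ _).trans ?_
    exact add_le_add
      (le_iSup₂ (f := fun h (_ : h ∈ Ioc (0 : ℝ) δ) => LpOn (fun x => jacobi α β x * symmDelta k (h * phiW x) f x) q
        (-1 + 2 * (k : ℝ) ^ 2 * h ^ 2) (1 - 2 * (k : ℝ) ^ 2 * h ^ 2)) h hh)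
      (le_iSup₂ (f := fun h (_ : h ∈ Ioc (0 : ℝ) δ) => LpOn (fun x => jacobi α β x * symmDelta k (h * phiW x) g x) q
        (-1 + 2 * (k : ℝ) ^ 2 * h ^ 2) (1 - 2 * (k : ℝ) ^ 2 * h ^ 2)) h hh)
  have h2 : OmegaFwd k (fun x => f x + g x) δ (jacobi α β) q ≤
      OmegaFwd k f δ (jacobi α β) q + OmegaFwd k g δ (jacobi α β) q := by
    unfold OmegaFwd
    refine iSup₂_le fun h hh => ?_
    refine (key (fun x => h) (fun x => x + k * h / 2) measurable_const (by fun_prop) _ _).trans ?_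
    exact add_le_add
      (le_iSup₂ (f := fun h (_ : h ∈ Ioc (0 : ℝ) (2 * (k : ℝ) ^ 2 * δ ^ 2)) =>
        LpOn (fun x => jacobi α β x * symmDelta k h f (x + k * h / 2)) q
        (-1) (-1 + 2 * (k : ℝ) ^ 2 * δ ^ 2)) h hh)
      (le_iSup₂ (f := fun h (_ : h ∈ Ioc (0 : ℝ) (2 * (k : ℝ) ^ 2 * δ ^ 2)) =>
        LpOn (fun x => jacobi α β x * symmDelta k h g (x + k * h / 2)) q
        (-1) (-1 + 2 * (k : ℝ) ^ 2 * δ ^ 2)) h hh)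
  have h3 : OmegaBwd k (fun x => f x + g x) δ (jacobi α β) q ≤
      OmegaBwd k f δ (jacobi α β) q + OmegaBwd k g δ (jacobi α β) q := by
    unfold OmegaBwd
    refine iSup₂_le fun h hh => ?_
    refine (key (fun x => h) (fun x => x - k * h / 2) measurable_const (by fun_prop) _ _).trans ?_
    exact add_le_add
      (le_iSup₂ (f := fun h (_ : h ∈ Ioc (0 : ℝ) (2 * (k : ℝ) ^ 2 * δ ^ 2)) =>
        LpOn (fun x => jacobi α β x * symmDelta k h f (x - k * h / 2)) q
        (1 - 2 * (k : ℝ) ^ 2 * δ ^ 2) 1) h hh)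
      (le_iSup₂ (f := fun h (_ : h ∈ Ioc (0 : ℝ) (2 * (k : ℝ) ^ 2 * δ ^ 2)) =>
        LpOn (fun x => jacobi α β x * symmDelta k h g (x - k * h / 2)) q
        (1 - 2 * (k : ℝ) ^ 2 * δ ^ 2) 1) h hh)
  unfold omegaDT
  calc _ ≤ _ := add_le_add (add_le_add h1 h2) h3
    _ = _ := by ring

lemma omegaDT_smul (k : ℕ) (δ : ℝ) (w : ℝ → ℝ) (q : ℝ≥0∞) (c : ℝ) (f : ℝ → ℝ) :
    omegaDT k (fun x => c * f x) δ w q = ENNReal.ofReal |c| * omegaDT k f δ w q := by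
  have key : ∀ (H X : ℝ → ℝ) (a b : ℝ),
      LpOn (fun x => w x * symmDelta k (H x) (fun x => c * f x) (X x)) q a b =
      ENNReal.ofReal |c| * LpOn (fun x => w x * symmDelta k (H x) f (X x)) q a b := by
    intro H X a b
    unfold LpOn
    have : ENNReal.ofReal |c| = ‖c‖ₑ := by rw [← Real.norm_eq_abs, ofReal_norm]
    rw [this, ← eLpNorm_const_smul]
    congr 1
    funext x
    simp only [symmDelta_smul, Pi.smul_apply, smul_eq_mul]
    ring
  unfold omegaDT OmegaMain OmegaFwd OmegaBwd
  simp only [mul_add, ENNReal.mul_iSup]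
  congr 1
  · congr 1
    · refine iSup_congr fun h => iSup_congr fun _ => ?_
      exact key (fun x => h * phiW x) (fun x => x) _ _
    · refine iSup_congr fun h => iSup_congr fun _ => ?_
      exact key (fun x => h) (fun x => x + k * h / 2) _ _
  · refine iSup_congr fun h => iSup_congr fun _ => ?_
    exact key (fun x => h) (fun x => x - k * h / 2) _ _

lemma omegaDT_poly_add (k : ℕ) (hk : 1 ≤ k) (δ : ℝ) (w : ℝ → ℝ) (q : ℝ≥0∞) (P : Polynomial ℝ)
    (hP : P.degree < k) (f : ℝ → ℝ) :
    omegaDT k (fun x => f x - P.eval x) δ w q = omegaDT k f δ w q := by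
  have : ∀ h x, symmDelta k h (fun x => f x - P.eval x) x = symmDelta k h f x := by
    intro h x
    have := symmDelta_add k h (fun x => f x - P.eval x) (fun x => P.eval x) x
    rw [symmDelta_poly k hk h P hP, add_zero] at this
    rw [← this]
    simp
  unfold omegaDT OmegaMain OmegaFwd OmegaBwd
  simp only [this]

lemma pow_fin (p : ℝ≥0∞) (hp : 1 ≤ p) (α : ℝ) (hα : α ∈ Jset p) :
    LpOn (fun x => (1 + x) ^ α) p (-1) 1 ≠ ⊤ := by
  unfold LpOn
  unfold Jset at hα
  have hm : Measurable (fun x : ℝ => (1 + x) ^ α) := by fun_prop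
  by_cases h : p = ⊤
  · rw [if_pos h] at hα
    subst h
    rw [eLpNorm_exponent_top]
    refine (eLpNormEssSup_lt_top_of_ae_bound (C := (2 : ℝ) ^ α) ?_).ne
    rw [ae_restrict_iff' measurableSet_Icc]
    refine Eventually.of_forall fun x hx => ?_
    rw [Real.norm_of_nonneg (Real.rpow_nonneg (by linarith [hx.1]) _)]
    exact Real.rpow_le_rpow (by linarith [hx.1]) (by linarith [hx.2]) hα
  · rw [if_neg h] at hα
    have hp0 : p ≠ 0 := (lt_of_lt_of_le one_pos hp).ne'
    have hpr : 0 < p.toReal := ENNReal.toReal_pos hp0 h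
    have hr : -1 < α * p.toReal := by
      have := hα
      rw [mem_Ioi, div_lt_iff₀ hpr] at this
      exact this
    have : MemLp (fun x : ℝ => (1 + x) ^ α) p (volume.restrict (Icc (-1) 1)) := by
      rw [← integrable_norm_rpow_iff hm.aestronglyMeasurable hp0 h]
      have h1 : IntegrableOn (fun x : ℝ => (1 + x) ^ (α * p.toReal)) (Icc (-1) 1) := by
        rw [integrableOn_Icc_iff_integrableOn_Ioc]
        have := (intervalIntegral.intervalIntegrable_rpow' hr (a := 0) (b := 2)).comp_add_left 1
        norm_num at this
        rwa [intervalIntegrable_iff_integrableOn_Ioc_of_le (by norm_num)] at this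
      refine h1.congr ?_
      rw [Filter.EventuallyEq, ae_restrict_iff' measurableSet_Icc]
      refine Eventually.of_forall fun x hx => ?_
      have hx0 : 0 ≤ 1 + x := by linarith [hx.1]
      rw [Real.norm_of_nonneg (Real.rpow_nonneg hx0 _), Real.rpow_mul hx0]
    exact this.2.ne

lemma rpow_bd (t β : ℝ) (h1 : 1 ≤ t) (h2 : t ≤ 2) : t ^ β ≤ 2 ^ |β| :=
  (Real.rpow_le_rpow_of_exponent_le h1 (le_abs_self β)).trans
    (Real.rpow_le_rpow (by linarith) h2 (abs_nonneg β))

lemma jacobi_nonneg (α β x : ℝ) (hx : x ∈ Icc (-1 : ℝ) 1) : 0 ≤ jacobi α β x :=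
  mul_nonneg (Real.rpow_nonneg (by linarith [hx.1]) _) (Real.rpow_nonneg (by linarith [hx.2]) _)

lemma jacobi_pos (α β x : ℝ) (hx : x ∈ Ioo (-1 : ℝ) 1) : 0 < jacobi α β x :=
  mul_pos (Real.rpow_pos_of_pos (by linarith [hx.1]) _) (Real.rpow_pos_of_pos (by linarith [hx.2]) _)

lemma jacobi_fin (p : ℝ≥0∞) (hp : 1 ≤ p) (α β : ℝ) (hα : α ∈ Jset p) (hβ : β ∈ Jset p) :
    LpOn (jacobi α β) p (-1) 1 ≠ ⊤ := by
  have h1 := pow_fin p hp α hα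
  have h2 : LpOn (fun x => (1 - x) ^ β) p (-1) 1 ≠ ⊤ := by
    have := LpOn_neg (fun x => (1 + x) ^ β) p (-1) 1
    simp only [neg_neg] at this
    have h3 := pow_fin p hp β hβ
    rw [← this] at h3
    simpa only [← sub_eq_add_neg] using h3
  have hm1 : MemLp (fun x : ℝ => (1 + x) ^ α) p (volume.restrict (Icc (-1) 1)) :=
    ⟨(by fun_prop : Measurable (fun x : ℝ => (1 + x) ^ α)).aestronglyMeasurable, lt_top_iff_ne_top.2 h1⟩
  have hm2 : MemLp (fun x : ℝ => (1 - x) ^ β) p (volume.restrict (Icc (-1) 1)) :=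
    ⟨(by fun_prop : Measurable (fun x : ℝ => (1 - x) ^ β)).aestronglyMeasurable, lt_top_iff_ne_top.2 h2⟩
  have hm := (hm1.const_mul (2 ^ |β|)).add (hm2.const_mul (2 ^ |α|))
  refine (MemLp.mono hm (measurable_jacobi α β).aestronglyMeasurable ?_).2.ne
  rw [ae_restrict_iff' measurableSet_Icc]
  refine Eventually.of_forall fun x hx => ?_
  have ha : 0 ≤ (1 + x) ^ α := Real.rpow_nonneg (by linarith [hx.1]) _
  have hb : 0 ≤ (1 - x) ^ β := Real.rpow_nonneg (by linarith [hx.2]) _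
  rw [Real.norm_of_nonneg (jacobi_nonneg α β x hx)]
  refine le_trans ?_ (le_abs_self _)
  simp only [Pi.add_apply]
  unfold jacobi
  have hc : (0 : ℝ) < 2 ^ |β| := by positivity
  have hd : (0 : ℝ) < 2 ^ |α| := by positivity
  rcases le_total x 0 with h | h
  · have := rpow_bd (1 - x) β (by linarith) (by linarith [hx.1])
    nlinarith [mul_nonneg hd.le hb]
  · have := rpow_bd (1 + x) α (by linarith) (by linarith [hx.2])
    nlinarith [mul_nonneg hc.le ha]

lemma dil (f : ℝ → ℝ) (hf : Measurable f) (p : ℝ≥0∞) (a c : ℝ) (ha : 0 < a)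
    (hc : 1 ≤ |c|) (hc2 : |c| * (2 * a) ≤ 1 / 2) :
    eLpNorm (fun x => f (c * x)) p (volume.restrict (Icc a (2 * a))) ≤
      eLpNorm f p (volume.restrict (Icc (-1 / 2) (1 / 2))) := by
  have hc0 : c ≠ 0 := by rintro rfl; norm_num at hc
  have hm : Measurable (fun x : ℝ => c * x) := by fun_prop
  have : eLpNorm (fun x => f (c * x)) p (volume.restrict (Icc a (2 * a))) =
      eLpNorm f p (Measure.map (fun x => c * x) (volume.restrict (Icc a (2 * a)))) := by
    rw [eLpNorm_map_measure hf.aestronglyMeasurable hm.aemeasurable]; rfl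
  rw [this]
  apply eLpNorm_mono_measure
  rw [Measure.le_iff]
  intro s hs
  rw [Measure.map_apply hm hs, Measure.restrict_apply (hm hs), Measure.restrict_apply hs]
  calc volume ((fun x => c * x) ⁻¹' s ∩ Icc a (2 * a))
      ≤ volume ((fun x => c * x) ⁻¹' (s ∩ Icc (-1 / 2) (1 / 2))) := by
        apply measure_mono
        rintro x ⟨hx1, hx2⟩
        refine ⟨hx1, ?_⟩
        have : |c * x| ≤ 1 / 2 := by
          rw [abs_mul, abs_of_pos (lt_of_lt_of_le ha hx2.1)]
          refine le_trans ?_ hc2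
          gcongr
          exact hx2.2
        rw [abs_le] at this
        constructor <;> linarith [this.1, this.2]
    _ = ENNReal.ofReal |c⁻¹| * volume (s ∩ Icc (-1 / 2) (1 / 2)) := Real.volume_preimage_mul_left hc0 _
    _ ≤ 1 * volume (s ∩ Icc (-1 / 2) (1 / 2)) := by
        gcongr
        rw [ENNReal.ofReal_le_one, abs_inv]
        exact inv_le_one_of_one_le₀ hc
    _ = _ := one_mul _

lemma poly_bound (k : ℕ) (hk : 1 ≤ k) (p : ℝ≥0∞) (hp : 1 ≤ p) (α β : ℝ) :
    ∃ K : ℝ≥0∞, K ≠ ⊤ ∧ ∀ (f : ℝ → ℝ) (_ : Measurable f) (P : Polynomial ℝ), P.degree < k →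
    kMonotoneOn k (trP (fun y => f y - P.eval y)) →
    kMonotoneOn k (trM (fun y => f y - P.eval y)) →
    ∀ y ∈ Icc (-1 : ℝ) 1, ‖P.eval y‖ₑ ≤ K * LpOn (fun x => jacobi α β x * f x) p (-1) 1 := by
  obtain ⟨a, ha, ha2, C, hC, hb⟩ := bound2 k hk
  have hcont : ContinuousOn (jacobi α β) (Icc (-1 / 2) (1 / 2)) := by
    unfold jacobi
    refine ContinuousOn.mul ?_ ?_
    · exact ContinuousOn.rpow_const (by fun_prop) fun x hx => Or.inl (by linarith [hx.1])
    · exact ContinuousOn.rpow_const (by fun_prop) fun x hx => Or.inl (by linarith [hx.2])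
  obtain ⟨x0, hx0, hmin⟩ := isCompact_Icc.exists_isMinOn
    (⟨0, by norm_num, by norm_num⟩ : (Icc (-1 / 2 : ℝ) (1 / 2)).Nonempty) hcont
  set m := jacobi α β x0 with hmdef
  have hm : 0 < m := jacobi_pos α β x0 ⟨by linarith [hx0.1], by linarith [hx0.2]⟩
  set μ := volume.restrict (Icc a (2 * a)) with hμ
  set D : ℝ≥0∞ := μ univ ^ (1 / p.toReal) with hD
  have hμu : μ univ = ENNReal.ofReal a := by
    rw [hμ, Measure.restrict_apply_univ, Real.volume_Icc]; congr 1; ring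
  have hp0 : p ≠ 0 := (lt_of_lt_of_le one_pos hp).ne'
  have hD0 : D ≠ 0 := by
    rw [hD, hμu]
    exact (ENNReal.rpow_pos (by simpa using ha) (by simp)).ne'
  have hDt : D ≠ ⊤ := by
    rw [hD, hμu]
    exact ENNReal.rpow_ne_top_of_nonneg (by positivity) (by simp)
  set I := Finset.range k ×ˢ Finset.range (k + 1) with hI
  refine ⟨D⁻¹ * (‖C‖ₑ * (I.card * ‖m⁻¹‖ₑ)), ?_, ?_⟩
  · refine ENNReal.mul_ne_top (by simpa using hD0) (ENNReal.mul_ne_top (by simp)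
      (ENNReal.mul_ne_top (by simp) (by simp)))
  intro f hf P hP h1 h2 y hy
  set c : ℕ × ℕ → ℝ := fun ij => (1 - 2 * (ij.2 : ℝ)) * ((ij.1 : ℝ) + 1) with hc
  have hcm : ∀ ij ∈ I, 1 ≤ |c ij| ∧ |c ij| * (2 * a) ≤ 1 / 2 := by
    rintro ⟨i, j⟩ hij
    rw [hI, Finset.mem_product, Finset.mem_range, Finset.mem_range] at hij
    obtain ⟨hi, hj⟩ := hij
    simp only at hi hj
    simp only [hc]
    have hi' : (i : ℝ) + 1 ≤ k := by exact_mod_cast hi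
    have hj' : (j : ℝ) ≤ k := by exact_mod_cast Nat.lt_succ_iff.1 hj
    have hi0 : (0 : ℝ) ≤ i := by positivity
    have hj0 : (0 : ℝ) ≤ j := by positivity
    have hk1 : (1 : ℝ) ≤ k := by exact_mod_cast hk
    rw [abs_mul, abs_of_pos (by positivity : (0 : ℝ) < (i : ℝ) + 1)]
    have h3 : (1 : ℝ) ≤ |1 - 2 * (j : ℝ)| := by
      have : (1 - 2 * (j : ℤ)) ≠ 0 := by omega
      exact_mod_cast Int.one_le_abs this
    have h4 : |1 - 2 * (j : ℝ)| ≤ 2 * k := by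
      rw [abs_le]; constructor <;> linarith
    constructor
    · nlinarith
    · calc |1 - 2 * (j : ℝ)| * ((i : ℝ) + 1) * (2 * a) ≤ (2 * k) * k * (2 * a) := by gcongr
        _ ≤ 1 / 2 := by linarith
  have e1 : eLpNorm (fun _ : ℝ => P.eval y) p μ = ‖P.eval y‖ₑ * D := by
    rw [eLpNorm_const _ hp0]
    intro h
    rw [h] at hμu
    simp at hμu
    linarith
  have e2 : eLpNorm (fun _ : ℝ => P.eval y) p μ ≤
      eLpNorm (fun x => C * ∑ ij ∈ I, |f (c ij * x)|) p μ := by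
    apply eLpNorm_mono_ae
    rw [hμ, ae_restrict_iff' measurableSet_Icc]
    refine Eventually.of_forall fun x hx => ?_
    have := hb f P hP h1 h2 x hx y hy
    rw [← Finset.sum_product' (f := fun (i j : ℕ) => |f ((1 - 2 * (j : ℝ)) * (((i : ℝ) + 1) * x))|)] at this
    refine le_trans this (le_trans (le_of_eq ?_) (le_abs_self _))
    congr 1
    refine Finset.sum_congr rfl fun ij _ => ?_
    rw [hc, mul_assoc]
  have e3 : eLpNorm (fun x => C * ∑ ij ∈ I, |f (c ij * x)|) p μ ≤
      ‖C‖ₑ * ∑ ij ∈ I, eLpNorm (fun x => |f (c ij * x)|) p μ := by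
    have : (fun x => C * ∑ ij ∈ I, |f (c ij * x)|) = C • (∑ ij ∈ I, fun x => |f (c ij * x)|) := by
      funext x; simp
    rw [this, eLpNorm_const_smul]
    gcongr
    refine eLpNorm_sum_le (fun ij _ => ?_) hp
    have : Measurable (fun x => |f (c ij * x)|) := (hf.comp (by fun_prop)).abs
    exact this.aestronglyMeasurable
  have e4 : ∀ ij ∈ I, eLpNorm (fun x => |f (c ij * x)|) p μ ≤
      ‖m⁻¹‖ₑ * LpOn (fun x => jacobi α β x * f x) p (-1) 1 := by
    intro ij hij
    have t1 : eLpNorm (fun x => |f (c ij * x)|) p μ = eLpNorm (fun x => f (c ij * x)) p μ :=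
      eLpNorm_congr_norm_ae (Eventually.of_forall fun x => by simp)
    rw [t1]
    refine (dil f hf p a (c ij) ha (hcm ij hij).1 (hcm ij hij).2).trans ?_
    unfold LpOn
    rw [← eLpNorm_const_smul]
    refine le_trans (eLpNorm_mono_ae (g := m⁻¹ • fun x => jacobi α β x * f x) ?_)
      (eLpNorm_mono_measure _ (Measure.restrict_mono_set _ (Icc_subset_Icc (by norm_num) (by norm_num))))
    rw [ae_restrict_iff' measurableSet_Icc]
    refine Eventually.of_forall fun x hx => ?_
    have hmx : m ≤ jacobi α β x := hmin hx
    simp only [Pi.smul_apply, smul_eq_mul, norm_mul, norm_inv]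
    rw [Real.norm_of_nonneg hm.le, Real.norm_of_nonneg (hm.le.trans hmx), ← mul_assoc]
    refine le_mul_of_one_le_left (norm_nonneg _) ?_
    rw [← div_eq_inv_mul, one_le_div hm]
    exact hmx
  have e5 : ‖P.eval y‖ₑ * D ≤ ‖C‖ₑ * (I.card * ‖m⁻¹‖ₑ) * LpOn (fun x => jacobi α β x * f x) p (-1) 1 := by
    rw [← e1]
    refine e2.trans (e3.trans ?_)
    rw [mul_assoc]
    gcongr
    refine (Finset.sum_le_sum e4).trans ?_
    rw [Finset.sum_const, nsmul_eq_mul, mul_assoc]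
  calc ‖P.eval y‖ₑ = D⁻¹ * (‖P.eval y‖ₑ * D) := by
        rw [mul_comm _ D, ← mul_assoc, ENNReal.inv_mul_cancel hD0 hDt, one_mul]
    _ ≤ D⁻¹ * (‖C‖ₑ * (I.card * ‖m⁻¹‖ₑ) * LpOn (fun x => jacobi α β x * f x) p (-1) 1) := by gcongr
    _ = _ := by ring

lemma measurable_trP {f : ℝ → ℝ} (hf : Measurable f) : Measurable (trP f) := by
  unfold trP
  exact Measurable.ite measurableSet_Ioi hf measurable_const

lemma measurable_trM {f : ℝ → ℝ} (hf : Measurable f) : Measurable (trM f) := by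
  unfold trM
  exact Measurable.ite measurableSet_Ioi measurable_const hf

lemma abs_trP_le (f : ℝ → ℝ) (x : ℝ) : |trP f x| ≤ |f x| := by
  unfold trP; split_ifs <;> simp

lemma abs_trM_le (f : ℝ → ℝ) (x : ℝ) : |trM f x| ≤ |f x| := by
  unfold trM; split_ifs <;> simp

lemma LpOn_mono_abs {g h : ℝ → ℝ} (p : ℝ≥0∞) (a b : ℝ) (H : ∀ x, |g x| ≤ |h x|) :
    LpOn g p a b ≤ LpOn h p a b :=
  eLpNorm_mono_ae (Eventually.of_forall fun x => by simpa using H x)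

lemma LpOn_w_bdd (p : ℝ≥0∞) (α β : ℝ) (g : ℝ → ℝ) (M : ℝ)
    (hM : ∀ x ∈ Icc (-1 : ℝ) 1, |g x| ≤ M) :
    LpOn (fun x => jacobi α β x * g x) p (-1) 1 ≤ ENNReal.ofReal M * LpOn (jacobi α β) p (-1) 1 := by
  unfold LpOn
  have hM0 : 0 ≤ M := (abs_nonneg _).trans (hM 0 (by norm_num))
  have : ENNReal.ofReal M = ‖M‖ₑ := by
    rw [← Real.enorm_of_nonneg hM0]
  rw [this, ← eLpNorm_const_smul]
  apply eLpNorm_mono_ae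
  rw [ae_restrict_iff' measurableSet_Icc]
  refine Eventually.of_forall fun x hx => ?_
  simp only [Pi.smul_apply, smul_eq_mul, norm_mul]
  rw [mul_comm, Real.norm_of_nonneg hM0]
  gcongr
  exact hM x hx

lemma kmono_pow (k : ℕ) : kMonotoneOn k (fun x => x ^ k) := by
  rw [kmono_iff]
  intro s hs hI
  have := Lagrange.coeff_eq_sum (s := s) (v := id) (fun _ _ _ _ h => h) (P := (Polynomial.X ^ k : Polynomial ℝ))
    (by rw [hs, Polynomial.degree_X_pow]; exact_mod_cast Nat.lt_succ_self k)
  unfold dd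
  simp only [id, Polynomial.eval_pow, Polynomial.eval_X] at this
  rw [← this, hs]
  simp

lemma exists_e (k : ℕ) (hk : 1 ≤ k) (p : ℝ≥0∞) (hp : 1 ≤ p) (α β : ℝ) (hα : α ∈ Jset p)
    (hβ : β ∈ Jset p) : ∃ e : ℝ → ℝ, Measurable e ∧ e ∈ MPlus k ∧
      LpOn (fun x => jacobi α β x * e x) p (-1) 1 ≠ 0 ∧
      LpOn (fun x => jacobi α β x * e x) p (-1) 1 ≠ ⊤ := by
  obtain ⟨P, hP, -, h1, -⟩ := exists_poly k hk _ (kmono_pow k)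
  have hmf : Measurable (fun y : ℝ => y ^ k - P.eval y) := by
    have : Continuous (fun y : ℝ => P.eval y) := P.continuous
    exact ((continuous_pow k).sub this).measurable
  have hme := measurable_trP hmf
  refine ⟨_, hme, ⟨h1, fun x _ hx => ?_⟩, ?_, ?_⟩
  · simp [trP, not_lt.2 hx]
  · intro h
    unfold LpOn at h
    have hmm : Measurable (fun x => jacobi α β x * trP (fun y : ℝ => y ^ k - P.eval y) x) :=
      (measurable_jacobi α β).mul hme
    rw [eLpNorm_eq_zero_iff hmm.aestronglyMeasurable
      (lt_of_lt_of_le one_pos hp).ne', Filter.EventuallyEq, ae_restrict_iff' measurableSet_Icc] at h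
    set F : Polynomial ℝ := Polynomial.X ^ k - P with hF
    have hF0 : F ≠ 0 := by
      intro h0
      rw [sub_eq_zero] at h0
      rw [← h0, Polynomial.degree_X_pow] at hP
      exact lt_irrefl _ hP
    have hfin : (F.roots.toFinset : Set ℝ).Finite := Finset.finite_toSet _
    have hz : ∀ᵐ x : ℝ ∂volume, x ∉ (F.roots.toFinset : Set ℝ) :=
      measure_eq_zero_iff_ae_notMem.1 (hfin.measure_zero _)
    have hbad : ∀ᵐ x : ℝ ∂volume, x ∉ Ioo (0 : ℝ) 1 := by
      filter_upwards [h, hz] with x hx hx2 hx3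
      have h4 := hx ⟨by linarith [hx3.1], hx3.2.le⟩
      simp only [Pi.zero_apply, mul_eq_zero] at h4
      rcases h4 with h4 | h4
      · exact (jacobi_pos α β x ⟨by linarith [hx3.1], hx3.2⟩).ne' h4
      · apply hx2
        simp only [trP, if_pos hx3.1] at h4
        simp only [Finset.mem_coe, Multiset.mem_toFinset]
        rw [Polynomial.mem_roots hF0, Polynomial.IsRoot, hF]
        simpa using h4
    have := measure_eq_zero_iff_ae_notMem.2 hbad
    simp at this
  · have hc : ContinuousOn (fun y : ℝ => y ^ k - P.eval y) (Icc (-1) 1) :=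
      ((continuous_pow k).sub P.continuous).continuousOn
    obtain ⟨M, hM⟩ := isCompact_Icc.exists_bound_of_continuousOn hc
    refine ne_top_of_le_ne_top (ENNReal.mul_ne_top ENNReal.ofReal_ne_top (jacobi_fin p hp α β hα hβ))
      (LpOn_w_bdd p α β _ M fun x hx => (abs_trP_le _ x).trans (hM x hx))

lemma LpOn_const_mul (p : ℝ≥0∞) (α β c : ℝ) (g : ℝ → ℝ) :
    LpOn (fun x => jacobi α β x * (c * g x)) p (-1) 1 =
      ENNReal.ofReal |c| * LpOn (fun x => jacobi α β x * g x) p (-1) 1 := by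
  unfold LpOn
  rw [← Real.norm_eq_abs, ofReal_norm, ← eLpNorm_const_smul]
  congr 1
  funext x
  simp only [Pi.smul_apply, smul_eq_mul]
  ring

lemma scaling (k : ℕ) (p q : ℝ≥0∞) (α β δ : ℝ) (g : ℝ → ℝ) (hg : Measurable g) (hgM : g ∈ MPlus k)
    (h0 : LpOn (fun x => jacobi α β x * g x) p (-1) 1 ≠ 0)
    (ht : LpOn (fun x => jacobi α β x * g x) p (-1) 1 ≠ ⊤) :
    omegaDT k g δ (jacobi α β) q ≤ LpOn (fun x => jacobi α β x * g x) p (-1) 1 *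
      (⨆ f ∈ BSet p α β ∩ MPlus k, omegaDT k f δ (jacobi α β) q) := by
  set N := LpOn (fun x => jacobi α β x * g x) p (-1) 1 with hN
  have hpos : 0 < N.toReal := ENNReal.toReal_pos h0 ht
  have hofr : ENNReal.ofReal |N.toReal⁻¹| = N⁻¹ := by
    rw [abs_of_pos (inv_pos.2 hpos), ENNReal.ofReal_inv_of_pos hpos, ENNReal.ofReal_toReal ht]
  have hmem : (fun x => N.toReal⁻¹ * g x) ∈ BSet p α β ∩ MPlus k := by
    refine ⟨⟨hg.const_mul _, ?_⟩, ?_, fun x h1 h2 => ?_⟩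
    · rw [LpOn_const_mul, ← hN, hofr, ENNReal.inv_mul_cancel h0 ht]
    · have := hgM.1
      rw [kmono_iff] at this ⊢
      intro s hs hI
      rw [dd_smul]
      exact mul_nonneg (inv_pos.2 hpos).le (this s hs hI)
    · simp [hgM.2 x h1 h2]
  have h1 := le_iSup₂ (f := fun f (_ : f ∈ BSet p α β ∩ MPlus k) => omegaDT k f δ (jacobi α β) q) _ hmem
  simp only [omegaDT_smul, hofr] at h1
  calc omegaDT k g δ (jacobi α β) q = N * (N⁻¹ * omegaDT k g δ (jacobi α β) q) := by
        rw [← mul_assoc, ENNReal.mul_inv_cancel h0 ht, one_mul]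
    _ ≤ _ := by gcongr

lemma gen (k : ℕ) (hk : 1 ≤ k) (p : ℝ≥0∞) (hp : 1 ≤ p) (α β : ℝ) (hα : α ∈ Jset p)
    (hβ : β ∈ Jset p) : ∃ E : ℝ≥0∞, E ≠ ⊤ ∧ ∀ (q : ℝ≥0∞) (_ : 1 ≤ q) (δ : ℝ) (g : ℝ → ℝ),
      Measurable g → g ∈ MPlus k → LpOn (fun x => jacobi α β x * g x) p (-1) 1 ≠ ⊤ →
      omegaDT k g δ (jacobi α β) q ≤ (LpOn (fun x => jacobi α β x * g x) p (-1) 1 + 2 * E) *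
      (⨆ f ∈ BSet p α β ∩ MPlus k, omegaDT k f δ (jacobi α β) q) := by
  obtain ⟨e, hem, heM, he0, het⟩ := exists_e k hk p hp α β hα hβ
  refine ⟨LpOn (fun x => jacobi α β x * e x) p (-1) 1, het, fun q hq δ g hg hgM ht => ?_⟩
  by_cases h0 : LpOn (fun x => jacobi α β x * g x) p (-1) 1 = 0
  · have hgz : (fun x => jacobi α β x * g x) =ᵐ[volume.restrict (Icc (-1) 1)] 0 := by
      unfold LpOn at h0
      have hmm : Measurable (fun x => jacobi α β x * g x) := (measurable_jacobi α β).mul hg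
      rwa [eLpNorm_eq_zero_iff hmm.aestronglyMeasurable
        (lt_of_lt_of_le one_pos hp).ne'] at h0
    have hE : LpOn (fun x => jacobi α β x * (g x + e x)) p (-1) 1 =
        LpOn (fun x => jacobi α β x * e x) p (-1) 1 := by
      refine eLpNorm_congr_ae ?_
      filter_upwards [hgz] with x hx
      simp only [Pi.zero_apply] at hx
      rw [mul_add, hx, zero_add]
    have hM : (fun x => g x + e x) ∈ MPlus k := by
      refine ⟨?_, fun x h1 h2 => by simp [hgM.2 x h1 h2, heM.2 x h1 h2]⟩
      have h1 := hgM.1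
      have h2 := heM.1
      rw [kmono_iff] at h1 h2 ⊢
      intro s hs hI
      rw [dd_add]
      exact add_nonneg (h1 s hs hI) (h2 s hs hI)
    have hge : Measurable (fun x => g x + e x) := hg.add hem
    have s1 := scaling k p q α β δ _ hge hM (by rw [hE]; exact he0) (by rw [hE]; exact het)
    have s2 := scaling k p q α β δ e hem heM he0 het
    have s3 := omegaDT_add k δ α β q hq hge (hem.const_mul (-1))
    have s4 : (fun x => g x + e x + -1 * e x) = g := by funext x; ring
    rw [omegaDT_smul] at s3
    rw [hE] at s1
    simp only [abs_neg, abs_one, ENNReal.ofReal_one, one_mul] at s3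
    rw [s4] at s3
    refine s3.trans ((add_le_add s1 s2).trans (le_of_eq ?_))
    rw [h0, zero_add, two_mul, add_mul]
  · exact (scaling k p q α β δ g hg hgM h0 ht).trans (by gcongr; exact le_self_add)

theorem statement10 (k : ℕ) (hk : 1 ≤ k) (q p : ℝ≥0∞) (hq : 1 ≤ q) (hqp : q < p)
    (α β : ℝ) (hα : α ∈ Jset p) (hβ : β ∈ Jset p) :
    ∃ c₁ > (0 : ℝ), ∃ c₂ > (0 : ℝ), ∀ δ : ℝ, 0 < δ →
      ENNReal.ofReal c₁ *
          ((⨆ f ∈ BSet p α β ∩ MPlus k, omegaDT k f δ (jacobi α β) q) +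
            (⨆ f ∈ BSet p β α ∩ MPlus k, omegaDT k f δ (jacobi β α) q)) ≤
        (⨆ f ∈ BSet p α β ∩ MSet k, omegaDT k f δ (jacobi α β) q) ∧
      (⨆ f ∈ BSet p α β ∩ MSet k, omegaDT k f δ (jacobi α β) q) ≤
        ENNReal.ofReal c₂ *
          ((⨆ f ∈ BSet p α β ∩ MPlus k, omegaDT k f δ (jacobi α β) q) +
            (⨆ f ∈ BSet p β α ∩ MPlus k, omegaDT k f δ (jacobi β α) q)) := by
  have hp : 1 ≤ p := hq.trans hqp.le
  obtain ⟨E, hE, hgen⟩ := gen k hk p hp α β hα hβ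
  obtain ⟨E', hE', hgen'⟩ := gen k hk p hp β α hβ hα
  obtain ⟨K, hK, hpb⟩ := poly_bound k hk p hp α β
  have hW := jacobi_fin p hp α β hα hβ
  set W := LpOn (jacobi α β) p (-1) 1 with hWdef
  have hT : (1 + K * W) + 2 * E + 2 * E' ≠ ⊤ := by
    simp [ENNReal.add_eq_top, ENNReal.mul_eq_top, hK, hW, hE, hE']
  set T := (1 + K * W) + 2 * E + 2 * E' with hTdef
  refine ⟨1 / 2, by norm_num, T.toReal + 1, by positivity, fun δ _ => ?_⟩
  set A := ⨆ f ∈ BSet p α β ∩ MPlus k, omegaDT k f δ (jacobi α β) q with hA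
  set B := ⨆ f ∈ BSet p β α ∩ MPlus k, omegaDT k f δ (jacobi β α) q with hB
  set S := ⨆ f ∈ BSet p α β ∩ MSet k, omegaDT k f δ (jacobi α β) q with hS
  constructor
  · have hAS : A ≤ S := biSup_mono fun f hf => ⟨hf.1, hf.2.1⟩
    have hBS : B ≤ S := by
      refine iSup₂_le fun f hf => ?_
      rw [← omegaDT_refl k f δ β α q]
      refine le_iSup₂ (f := fun f (_ : f ∈ BSet p α β ∩ MSet k) => omegaDT k f δ (jacobi α β) q) (jrefl k f) ?_
      refine ⟨⟨measurable_refl k hf.1.1, ?_⟩, jrefl_kmono k f hf.2.1⟩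
      rw [LpOn_refl]
      exact hf.1.2
    calc ENNReal.ofReal (1 / 2) * (A + B) ≤ ENNReal.ofReal (1 / 2) * (S + S) := by gcongr
      _ = S := by
        rw [← two_mul, ← mul_assoc, one_div, ENNReal.ofReal_inv_of_pos (by norm_num),
          ENNReal.ofReal_ofNat, ENNReal.inv_mul_cancel (by norm_num) (by norm_num), one_mul]
  · refine iSup₂_le fun f hf => ?_
    obtain ⟨⟨hfm, hf1⟩, hfM⟩ := hf
    obtain ⟨P, hP, hP0, h1, h2⟩ := exists_poly k hk f hfM
    have hPm : Measurable (fun y : ℝ => P.eval y) := P.continuous.measurable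
    set g : ℝ → ℝ := fun y => f y - P.eval y with hg
    have hgm : Measurable g := hfm.sub hPm
    have hgN : LpOn (fun x => jacobi α β x * g x) p (-1) 1 ≤ 1 + K * W := by
      have hPb : LpOn (fun x => jacobi α β x * P.eval x) p (-1) 1 ≤ K * W := by
        have := LpOn_w_bdd p α β (fun x => P.eval x) K.toReal fun x hx => by
          have h3 := hpb f hfm P hP h1 h2 x hx
          rw [hf1, mul_one] at h3
          have h4 := ENNReal.toReal_mono hK h3
          simpa using h4
        rwa [ENNReal.ofReal_toReal hK] at this
      rw [← hf1]
      refine le_trans ?_ (add_le_add_right hPb _)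
      have : (fun x => jacobi α β x * g x) =
          (fun x => jacobi α β x * f x) - fun x => jacobi α β x * P.eval x := by
        funext x; simp [hg, mul_sub]
      unfold LpOn
      rw [this]
      exact eLpNorm_sub_le ((measurable_jacobi α β).mul hfm).aestronglyMeasurable
        ((measurable_jacobi α β).mul hPm).aestronglyMeasurable hp
    have hKW : 1 + K * W ≠ ⊤ := by
      simp [ENNReal.mul_eq_top, hK, hW]
    have hN1 : LpOn (fun x => jacobi α β x * trP g x) p (-1) 1 ≤ 1 + K * W :=
      (LpOn_mono_abs p _ _ fun x => by
        rw [abs_mul, abs_mul]; exact mul_le_mul_of_nonneg_left (abs_trP_le g x) (abs_nonneg _)).trans hgN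
    have hN2 : LpOn (fun x => jacobi β α x * jrefl k (trM g) x) p (-1) 1 ≤ 1 + K * W := by
      rw [LpOn_refl]
      exact (LpOn_mono_abs p _ _ fun x => by
        rw [abs_mul, abs_mul]; exact mul_le_mul_of_nonneg_left (abs_trM_le g x) (abs_nonneg _)).trans hgN
    have hM1 : trP g ∈ MPlus k := ⟨h1, fun x _ hx => by simp [trP, not_lt.2 hx]⟩
    have hM2 : jrefl k (trM g) ∈ MPlus k := by
      refine ⟨jrefl_kmono k _ h2, fun x _ hx => ?_⟩
      have hz : trM g (-x) = 0 := by
        unfold trM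
        split_ifs with h
        · rfl
        · have : x = 0 := by linarith
          simp [hg, this, hP0]
      unfold jrefl
      rw [hz, mul_zero]
    have r1 := hgen q hq δ _ (measurable_trP hgm) hM1 (ne_top_of_le_ne_top hKW hN1)
    have r2 := hgen' q hq δ _ (measurable_refl k (measurable_trM hgm)) hM2 (ne_top_of_le_ne_top hKW hN2)
    rw [omegaDT_refl] at r2
    have r3 := omegaDT_add k δ α β q hq (measurable_trP hgm) (measurable_trM hgm)
    simp only [trP_add_trM] at r3
    have r4 := omegaDT_poly_add k hk δ (jacobi α β) q P hP f
    have hTle : T ≤ ENNReal.ofReal (T.toReal + 1) := by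
      conv_lhs => rw [← ENNReal.ofReal_toReal hT]
      exact ENNReal.ofReal_le_ofReal (by linarith)
    calc omegaDT k f δ (jacobi α β) q = omegaDT k g δ (jacobi α β) q := r4.symm
      _ ≤ _ := r3
      _ ≤ T * A + T * B := by
        refine add_le_add (r1.trans ?_) (r2.trans ?_)
        · refine mul_le_mul_left ?_ _
          exact (add_le_add_left hN1 _).trans le_self_add
        · refine mul_le_mul_left ?_ _
          refine (add_le_add_left hN2 _).trans ?_
          rw [hTdef]
          exact add_le_add_left le_self_add _
      _ = T * (A + B) := (mul_add _ _ _).symm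
      _ ≤ _ := by gcongr
end
end

section
/- Let 0 < δ < 1/100, β ∈ ℝ, 1 < q < ∞, and let f ∈ M² ∩ W_q^{β,β} be such that the restrictions of f to [−1, −1+100δ²] and to [1−100δ², 1] are linear (affine) polynomials. Then there is a constant c > 0, depending only on q and β, such that Ω_φ²(f, δ)_{φ^{2β}, q} ≤ c·δ^{1/q − 1}·Ω_φ²(f, δ)_{φ^{2β−1+1/q}, 1}, where φ^γ denotes the weight x ↦ (1−x²)^{γ/2}. -/
open MeasureTheory Set Filter
open scoped ENNReal

noncomputable section

/-- The weight `φ^γ : x ↦ (1-x²)^{γ/2}`. -/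
def phipow (γ : ℝ) (x : ℝ) : ℝ := (1 - x ^ 2) ^ (γ / 2)

lemma aux_sqle {a b : ℝ} (h : a ^ 2 ≤ b ^ 2) (hb : 0 ≤ b) : a ≤ b :=
  (le_abs_self a).trans (abs_le_of_sq_le_sq h hb)

lemma aux_convex {f : ℝ → ℝ} (hf : f ∈ MSet 2) : ConvexOn ℝ (Ioo (-1 : ℝ) 1) f := by
  apply convexOn_of_slope_mono_adjacent (convex_Ioo _ _)
  intro x y z hx hz hxy hyz
  have hy : y ∈ Ioo (-1 : ℝ) 1 := ⟨hx.1.trans hxy, hyz.trans hz.2⟩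
  have h := hf ![x, y, z] (by
    intro i j hij
    fin_cases i <;> fin_cases j <;> simp at hij ⊢ <;> linarith) (by
    intro i; fin_cases i <;> simpa using by assumption)
  have e0 : (Finset.univ.erase (0 : Fin 3)) = {1, 2} := by decide
  have e1 : (Finset.univ.erase (1 : Fin 3)) = {0, 2} := by decide
  have e2 : (Finset.univ.erase (2 : Fin 3)) = {0, 1} := by decide
  rw [Fin.sum_univ_three] at h
  rw [e0, e1, e2] at h
  simp at h
  have h1 : 0 < y - x := sub_pos.2 hxy
  have h2 : 0 < z - y := sub_pos.2 hyz
  have h3 : 0 < z - x := by linarith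
  have key : (f z - f y) / (z - y) - (f y - f x) / (y - x) =
    (z - x) * (f x / ((x - y) * (x - z)) + f y / ((y - x) * (y - z)) +
      f z / ((z - x) * (z - y))) := by
    have a1 : x - y ≠ 0 := by linarith
    have a2 : x - z ≠ 0 := by linarith
    have a3 : y - z ≠ 0 := by linarith
    rw [show x - y = -(y - x) by ring, show x - z = -(z - x) by ring,
      show y - z = -(z - y) by ring]
    field_simp
    ring
  have := mul_nonneg h3.le h
  rw [← key] at this
  linarith

lemma aux_slope {f : ℝ → ℝ} (hf : ConvexOn ℝ (Ioo (-1 : ℝ) 1) f) {a b c d : ℝ}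
    (ha : -1 < a) (hd : d < 1) (hab : a < b) (hbd : b ≤ d) (hac : a ≤ c) (hcd : c < d) :
    (f b - f a) / (b - a) ≤ (f d - f c) / (d - c) := by
  have A : a ∈ Ioo (-1 : ℝ) 1 := ⟨ha, by linarith⟩
  have B : b ∈ Ioo (-1 : ℝ) 1 := ⟨by linarith, by linarith⟩
  have C : c ∈ Ioo (-1 : ℝ) 1 := ⟨by linarith, by linarith⟩
  have D : d ∈ Ioo (-1 : ℝ) 1 := ⟨by linarith, by linarith⟩
  have h1 := hf.secant_mono A B D hab.ne' (hab.trans_le hbd).ne' hbd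
  have h2 := hf.secant_mono D A C (hab.trans_le hbd).ne hcd.ne hac
  rw [← neg_sub (f d) (f a), ← neg_sub d a, ← neg_sub (f d) (f c), ← neg_sub d c,
    neg_div_neg_eq, neg_div_neg_eq] at h2
  exact h1.trans h2

lemma aux_mono {f : ℝ → ℝ} (hf : ConvexOn ℝ (Ioo (-1 : ℝ) 1) f) {x s t : ℝ}
    (hs : 0 ≤ s) (hst : s ≤ t) (h1 : -1 < x - t) (h2 : x + t < 1) :
    f (x - s) - 2 * f x + f (x + s) ≤ f (x - t) - 2 * f x + f (x + t) := by
  rcases (hs.trans hst).eq_or_lt with h0 | h0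
  · have : s = t := by linarith
    rw [this]
  have A : x - t ∈ Ioo (-1 : ℝ) 1 := ⟨by linarith, by linarith⟩
  have B : x + t ∈ Ioo (-1 : ℝ) 1 := ⟨by linarith, by linarith⟩
  have ha : 0 ≤ (t + s) / (2 * t) := by positivity
  have hb : 0 ≤ (t - s) / (2 * t) := div_nonneg (by linarith) (by linarith)
  have hab : (t + s) / (2 * t) + (t - s) / (2 * t) = 1 := by field_simp; ring
  have k1 := hf.2 A B ha hb hab
  have k2 := hf.2 A B hb ha (by linarith)
  simp only [smul_eq_mul] at k1 k2
  have e1 : (t + s) / (2 * t) * (x - t) + (t - s) / (2 * t) * (x + t) = x - s := by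
    field_simp; ring
  have e2 : (t - s) / (2 * t) * (x - t) + (t + s) / (2 * t) * (x + t) = x + s := by
    field_simp; ring
  rw [e1] at k1
  rw [e2] at k2
  have : (t + s) / (2 * t) * (f (x - t) + f (x + t)) + (t - s) / (2 * t) * (f (x - t) + f (x + t))
    = f (x - t) + f (x + t) := by rw [← add_mul, hab, one_mul]
  linarith

lemma aux_nonneg {f : ℝ → ℝ} (hf : ConvexOn ℝ (Ioo (-1 : ℝ) 1) f) {x t : ℝ}
    (ht : 0 ≤ t) (h1 : -1 < x - t) (h2 : x + t < 1) :
    0 ≤ f (x - t) - 2 * f x + f (x + t) := by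
  have := aux_mono hf le_rfl ht h1 h2
  simp at this
  linarith

lemma aux_cont {f : ℝ → ℝ} (hf : ConvexOn ℝ (Ioo (-1 : ℝ) 1) f) :
    ContinuousOn f (Ioo (-1 : ℝ) 1) := hf.continuousOn isOpen_Ioo

lemma aux_int {f : ℝ → ℝ} (hf : ConvexOn ℝ (Ioo (-1 : ℝ) 1) f) {a b : ℝ} (ha : -1 < a)
    (hb : b < 1) (hab : a ≤ b) : IntervalIntegrable f volume a b := by
  apply ContinuousOn.intervalIntegrable
  rw [uIcc_of_le hab]
  exact (aux_cont hf).mono fun y hy => ⟨by linarith [hy.1], by linarith [hy.2]⟩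

lemma aux_contc {f : ℝ → ℝ} (hf : ConvexOn ℝ (Ioo (-1 : ℝ) 1) f) {a b c : ℝ} (ha : -1 < a + c)
    (hb : b + c < 1) : ContinuousOn (fun y => f (y + c)) (Icc a b) := by
  apply (aux_cont hf).comp (by fun_prop)
  intro y hy
  exact ⟨by linarith [hy.1], by linarith [hy.2]⟩

lemma aux_intc {f : ℝ → ℝ} (hf : ConvexOn ℝ (Ioo (-1 : ℝ) 1) f) {a b c : ℝ} (ha : -1 < a + c)
    (hb : b + c < 1) (hab : a ≤ b) : IntervalIntegrable (fun y => f (y + c)) volume a b := by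
  apply ContinuousOn.intervalIntegrable
  rw [uIcc_of_le hab]
  exact aux_contc hf ha hb

/-- averaging bound -/
lemma aux_avg {f : ℝ → ℝ} (hf : ConvexOn ℝ (Ioo (-1 : ℝ) 1) f) {x s : ℝ}
    (hs : 0 < s) (h1 : -1 < x - 3 * s) (h2 : x + 3 * s < 1) :
    2 * s * (f (x - 2 * s) - 2 * f x + f (x + 2 * s)) ≤
      4 * ∫ y in (x - 2 * s)..(x + 2 * s), (f (y - s) - 2 * f y + f (y + s)) := by
  have I1 : IntervalIntegrable (fun y => f (y - s)) volume (x - 2 * s) (x + 2 * s) := by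
    simpa [sub_eq_add_neg] using
      aux_intc hf (a := x - 2 * s) (b := x + 2 * s) (c := -s) (by linarith) (by linarith)
        (by linarith)
  have I2 : IntervalIntegrable (fun y => f (y + s)) volume (x - 2 * s) (x + 2 * s) :=
    aux_intc hf (by linarith) (by linarith) (by linarith)
  have I0 : IntervalIntegrable f volume (x - 2 * s) (x + 2 * s) :=
    aux_int hf (by linarith) (by linarith) (by linarith)
  have E : ∫ y in (x - 2 * s)..(x + 2 * s), (f (y - s) - 2 * f y + f (y + s)) =
      (∫ y in (x - 3 * s)..(x + s), f y) - 2 * (∫ y in (x - 2 * s)..(x + 2 * s), f y) +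
      ∫ y in (x - s)..(x + 3 * s), f y := by
    rw [intervalIntegral.integral_add (I1.sub (I0.const_mul 2)) I2,
      intervalIntegral.integral_sub I1 (I0.const_mul 2),
      intervalIntegral.integral_const_mul,
      intervalIntegral.integral_comp_sub_right (fun y => f y),
      intervalIntegral.integral_comp_add_right (fun y => f y),
      show x - 2 * s - s = x - 3 * s by ring, show x + 2 * s - s = x + s by ring,
      show x - 2 * s + s = x - s by ring, show x + 2 * s + s = x + 3 * s by ring]
  have J : ∀ a b : ℝ, -1 < a → b < 1 → a ≤ b → IntervalIntegrable f volume a b :=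
    fun a b ha hb hab => aux_int hf ha hb hab
  have s1 := intervalIntegral.integral_add_adjacent_intervals
    (J (x - 3 * s) (x - 2 * s) (by linarith) (by linarith) (by linarith))
    (J (x - 2 * s) (x + s) (by linarith) (by linarith) (by linarith))
  have s2 := intervalIntegral.integral_add_adjacent_intervals
    (J (x - 2 * s) (x + s) (by linarith) (by linarith) (by linarith))
    (J (x + s) (x + 2 * s) (by linarith) (by linarith) (by linarith))
  have s3 := intervalIntegral.integral_add_adjacent_intervals
    (J (x - 2 * s) (x - s) (by linarith) (by linarith) (by linarith))
    (J (x - s) (x + 2 * s) (by linarith) (by linarith) (by linarith))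
  have s4 := intervalIntegral.integral_add_adjacent_intervals
    (J (x - s) (x + 2 * s) (by linarith) (by linarith) (by linarith))
    (J (x + 2 * s) (x + 3 * s) (by linarith) (by linarith) (by linarith))
  -- right part
  have R : s * ((f (x + 2 * s) - f x) / 2) ≤
      (∫ y in (x + 2 * s)..(x + 3 * s), f y) - ∫ y in (x + s)..(x + 2 * s), f y := by
    have e : (∫ y in (x + 2 * s)..(x + 3 * s), f y) = ∫ y in (x + s)..(x + 2 * s), f (y + s) := by
      rw [intervalIntegral.integral_comp_add_right (fun y => f y)]
      congr 1 <;> ring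
    have K := aux_intc hf (a := x + s) (b := x + 2 * s) (c := s) (by linarith) (by linarith)
        (by linarith)
    rw [e, ← intervalIntegral.integral_sub K
      (J _ _ (by linarith) (by linarith) (by linarith))]
    have : s * ((f (x + 2 * s) - f x) / 2) =
        ∫ y in (x + s)..(x + 2 * s), ((f (x + 2 * s) - f x) / 2) := by
      rw [intervalIntegral.integral_const, smul_eq_mul]; ring
    rw [this]
    apply intervalIntegral.integral_mono_on (by linarith) (by simp)
      (K.sub (J _ _ (by linarith) (by linarith) (by linarith)))
    intro y hy
    have := aux_slope hf (a := x) (b := x + 2 * s) (c := y) (d := y + s)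
      (by linarith) (by linarith [hy.2]) (by linarith) (by linarith [hy.1]) (by linarith [hy.1])
      (by linarith)
    rw [show x + 2 * s - x = 2 * s by ring, show y + s - y = s by ring,
      div_le_div_iff₀ (by linarith) hs] at this
    nlinarith
  have L : (∫ y in (x - 2 * s)..(x - s), f y) - (∫ y in (x - 3 * s)..(x - 2 * s), f y) ≤
      s * ((f x - f (x - 2 * s)) / 2) := by
    have e : (∫ y in (x - 2 * s)..(x - s), f y) =
        ∫ y in (x - 3 * s)..(x - 2 * s), f (y + s) := by
      rw [intervalIntegral.integral_comp_add_right (fun y => f y)]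
      congr 1 <;> ring
    have K := aux_intc hf (a := x - 3 * s) (b := x - 2 * s) (c := s) (by linarith) (by linarith)
        (by linarith)
    rw [e, ← intervalIntegral.integral_sub K
      (J _ _ (by linarith) (by linarith) (by linarith))]
    have : s * ((f x - f (x - 2 * s)) / 2) =
        ∫ y in (x - 3 * s)..(x - 2 * s), ((f x - f (x - 2 * s)) / 2) := by
      rw [intervalIntegral.integral_const, smul_eq_mul]; ring
    rw [this]
    apply intervalIntegral.integral_mono_on (by linarith)
      (K.sub (J _ _ (by linarith) (by linarith) (by linarith))) (by simp)
    intro y hy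
    have := aux_slope hf (a := y) (b := y + s) (c := x - 2 * s) (d := x)
      (by linarith [hy.1]) (by linarith) (by linarith) (by linarith [hy.2]) (by linarith [hy.2])
      (by linarith)
    rw [show x - (x - 2 * s) = 2 * s by ring, show y + s - y = s by ring,
      div_le_div_iff₀ hs (by linarith)] at this
    nlinarith
  rw [E]
  nlinarith

lemma aux_rpow {a b e : ℝ} (ha : 0 < a) (hb : 0 < b) (h1 : a ≤ 4 * b) (h2 : b ≤ 4 * a) :
    a ^ e ≤ 4 ^ |e| * b ^ e := by
  rcases le_total 0 e with he | he
  · rw [abs_of_nonneg he, ← Real.mul_rpow (by norm_num) hb.le]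
    exact Real.rpow_le_rpow ha.le h1 he
  · rw [abs_of_nonpos he]
    have : b / 4 ≤ a := by linarith
    calc a ^ e ≤ (b / 4) ^ e := Real.rpow_le_rpow_of_nonpos (by positivity) this he
      _ = _ := by
        rw [Real.div_rpow hb.le (by norm_num), Real.rpow_neg (by norm_num)]
        field_simp

lemma aux_symm (f : ℝ → ℝ) {x t : ℝ} (ht : 0 ≤ t) (h1 : -1 ≤ x - t) (h2 : x + t ≤ 1) :
    symmDelta 2 t f x = f (x - t) - 2 * f x + f (x + t) := by
  unfold symmDelta
  rw [if_pos]
  · simp [Finset.sum_range_succ]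
    ring_nf
  · push_cast
    exact ⟨⟨by linarith, by linarith⟩, ⟨by linarith, by linarith⟩⟩

/-- step bound in the inner region -/
lemma aux_step {x δ : ℝ} (hδ : 0 < δ) (h1 : 18 * δ ^ 2 ≤ 1 - x) (h2 : 18 * δ ^ 2 ≤ 1 + x) :
    3 * (δ * phiW x) ≤ 1 - x ∧ 3 * (δ * phiW x) ≤ 1 + x ∧ 0 < phiW x := by
  have hp : 0 < δ ^ 2 := by positivity
  have hv : 0 < 1 - x ^ 2 := by nlinarith
  have hs : phiW x ^ 2 = 1 - x ^ 2 := Real.sq_sqrt hv.le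
  have hpos : 0 < phiW x := Real.sqrt_pos.2 hv
  refine ⟨?_, ?_, hpos⟩
  · apply aux_sqle _ (by linarith)
    have : (3 * (δ * phiW x)) ^ 2 = 9 * δ ^ 2 * ((1 - x) * (1 + x)) := by
      rw [mul_pow, mul_pow, hs]; ring
    rw [this]
    nlinarith [mul_nonneg (by linarith : 0 ≤ 1 - x) (by nlinarith : 0 ≤ 1 - x - 9 * δ ^ 2 * (1 + x))]
  · apply aux_sqle _ (by linarith)
    have : (3 * (δ * phiW x)) ^ 2 = 9 * δ ^ 2 * ((1 - x) * (1 + x)) := by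
      rw [mul_pow, mul_pow, hs]; ring
    rw [this]
    nlinarith [mul_nonneg (by linarith : 0 ≤ 1 + x) (by nlinarith : 0 ≤ 1 + x - 9 * δ ^ 2 * (1 - x))]

/-- zero region -/
lemma aux_zero {f : ℝ → ℝ} {x δ h : ℝ} (hh : 0 < h) (hhδ : h ≤ δ) (hδ : δ < 1 / 100)
    (hL : ∃ a b : ℝ, ∀ x ∈ Icc (-1 : ℝ) (-1 + 100 * δ ^ 2), f x = a * x + b)
    (hR : ∃ a b : ℝ, ∀ x ∈ Icc (1 - 100 * δ ^ 2) (1 : ℝ), f x = a * x + b)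
    (hx1 : -1 + 8 * h ^ 2 ≤ x) (hx2 : x ≤ 1 - 8 * h ^ 2)
    (hx : 1 - x < 18 * δ ^ 2 ∨ 1 + x < 18 * δ ^ 2) :
    symmDelta 2 (h * phiW x) f x = 0 := by
  have hp : 0 < h ^ 2 := by positivity
  have hδ0 : 0 < δ := hh.trans_le hhδ
  have hδ2 : δ ^ 2 < 1 / 10000 := by nlinarith
  have hp2 : 0 < δ ^ 2 := by positivity
  have hhd : h ^ 2 ≤ δ ^ 2 := by nlinarith
  have hv : 0 < 1 - x ^ 2 := by nlinarith
  have hs : phiW x ^ 2 = 1 - x ^ 2 := Real.sq_sqrt hv.le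
  have hpos : 0 < phiW x := Real.sqrt_pos.2 hv
  have ht : 0 < h * phiW x := by positivity
  have hsq : (h * phiW x) ^ 2 = h ^ 2 * ((1 - x) * (1 + x)) := by
    rw [mul_pow, hs]; ring
  have b1 : h * phiW x ≤ 1 - x := by
    apply aux_sqle _ (by linarith)
    rw [hsq]
    nlinarith [mul_nonneg (by linarith : 0 ≤ 1 - x) (by nlinarith : 0 ≤ 1 - x - h ^ 2 * (1 + x))]
  have b2 : h * phiW x ≤ 1 + x := by
    apply aux_sqle _ (by linarith)
    rw [hsq]
    nlinarith [mul_nonneg (by linarith : 0 ≤ 1 + x) (by nlinarith : 0 ≤ 1 + x - h ^ 2 * (1 - x))]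
  rw [aux_symm f ht.le (by linarith) (by linarith)]
  rcases hx with hx | hx
  · obtain ⟨a, b, hab⟩ := hR
    rw [hab _ ⟨by linarith, by linarith⟩, hab _ ⟨by linarith, by linarith⟩,
      hab _ ⟨by linarith, by linarith⟩]
    ring
  · obtain ⟨a, b, hab⟩ := hL
    rw [hab _ ⟨by linarith, by linarith⟩, hab _ ⟨by linarith, by linarith⟩,
      hab _ ⟨by linarith, by linarith⟩]
    ring

/-- key pointwise bound -/
lemma aux_key {f : ℝ → ℝ} (hf : ConvexOn ℝ (Ioo (-1 : ℝ) 1) f) {x δ e : ℝ} (hδ : 0 < δ)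
    (h1 : 18 * δ ^ 2 ≤ 1 - x) (h2 : 18 * δ ^ 2 ≤ 1 + x) :
    ENNReal.ofReal (phiW x * (1 - x ^ 2) ^ e * symmDelta 2 (δ * phiW x) f x) ≤
      ENNReal.ofReal (4 * 4 ^ |e| / δ) *
        ∫⁻ y in Icc (-1 + 8 * δ ^ 2) (1 - 8 * δ ^ 2),
          ENNReal.ofReal ((1 - y ^ 2) ^ e * symmDelta 2 (δ * phiW y) f y) := by
  obtain ⟨k1, k2, hφ⟩ := aux_step hδ h1 h2
  have hp2 : 0 < δ ^ 2 := by positivity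
  have hH : 0 < δ * phiW x := by positivity
  obtain ⟨s, hs⟩ : ∃ s, s = δ * phiW x / 2 := ⟨_, rfl⟩
  have hs2 : δ * phiW x = 2 * s := by linarith
  have hs0 : 0 < s := by linarith
  rw [hs2] at k1 k2
  have hxp : 0 < 1 - x := by linarith
  have hxm : 0 < 1 + x := by linarith
  have A := aux_avg hf (x := x) hs0 (by linarith) (by linarith)
  have hv : 0 < 1 - x ^ 2 := by nlinarith
  have cont : ContinuousOn (fun y => f (y - s) - 2 * f y + f (y + s))
      (Icc (x - 2 * s) (x + 2 * s)) := by
    have c1 := aux_contc hf (a := x - 2 * s) (b := x + 2 * s) (c := -s) (by linarith) (by linarith)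
    have c2 := aux_contc hf (a := x - 2 * s) (b := x + 2 * s) (c := s) (by linarith) (by linarith)
    have c3 := aux_contc hf (a := x - 2 * s) (b := x + 2 * s) (c := 0) (by linarith) (by linarith)
    simp only [← sub_eq_add_neg, add_zero] at c1 c3
    exact (c1.sub (c3.const_smul (2 : ℝ))).add c2
  have facts : ∀ y ∈ Icc (x - 2 * s) (x + 2 * s),
      0 ≤ f (y - s) - 2 * f y + f (y + s) := by
    intro y hy
    exact aux_nonneg hf hs0.le (by linarith [hy.1]) (by linarith [hy.2])
  have B : ENNReal.ofReal (∫ y in (x - 2 * s)..(x + 2 * s), (f (y - s) - 2 * f y + f (y + s))) =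
      ∫⁻ y in Icc (x - 2 * s) (x + 2 * s), ENNReal.ofReal (f (y - s) - 2 * f y + f (y + s)) := by
    rw [intervalIntegral.integral_of_le (by linarith), ← integral_Icc_eq_integral_Ioc]
    apply ofReal_integral_eq_lintegral_ofReal cont.integrableOn_Icc
    exact (ae_restrict_iff' measurableSet_Icc).2 (Eventually.of_forall facts)
  have D : ∀ y ∈ Icc (x - 2 * s) (x + 2 * s),
      (1 - x ^ 2) ^ e * (f (y - s) - 2 * f y + f (y + s)) ≤
      4 ^ |e| * ((1 - y ^ 2) ^ e * symmDelta 2 (δ * phiW y) f y) := by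
    intro y hy
    have y1 : 2 / 3 * (1 - x) ≤ 1 - y := by linarith [hy.2]
    have y2 : 2 / 3 * (1 + x) ≤ 1 + y := by linarith [hy.1]
    have y3 : 1 - y ≤ 4 / 3 * (1 - x) := by linarith [hy.1]
    have y4 : 1 + y ≤ 4 / 3 * (1 + x) := by linarith [hy.2]
    have w1 : 4 / 9 * (1 - x ^ 2) ≤ 1 - y ^ 2 := by
      have := mul_le_mul y1 y2 (by linarith) (by linarith)
      linarith
    have w2 : 1 - y ^ 2 ≤ 16 / 9 * (1 - x ^ 2) := by
      have := mul_le_mul y3 y4 (by linarith) (by linarith)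
      linarith
    have hvy : 0 < 1 - y ^ 2 := by linarith
    have hsy : phiW y ^ 2 = 1 - y ^ 2 := Real.sq_sqrt hvy.le
    have hsx : phiW x ^ 2 = 1 - x ^ 2 := Real.sq_sqrt hv.le
    have hposy : 0 < phiW y := Real.sqrt_pos.2 hvy
    have hc : phiW x / 2 ≤ phiW y := by
      apply aux_sqle _ hposy.le
      rw [div_pow, hsx, hsy]; linarith
    have hst : s ≤ δ * phiW y := by
      have := mul_le_mul_of_nonneg_left hc hδ.le
      linarith
    have hsq : (δ * phiW y) ^ 2 = δ ^ 2 * ((1 - y) * (1 + y)) := by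
      rw [mul_pow, hsy]; ring
    have q1 : 0 < 1 - y := by linarith
    have q2 : 0 < 1 + y := by linarith
    have b1 : δ * phiW y < 1 - y := by
      apply lt_of_pow_lt_pow_left₀ 2 q1.le
      rw [hsq]
      nlinarith [mul_pos q1 (by nlinarith : 0 < 1 - y - δ ^ 2 * (1 + y))]
    have b2 : δ * phiW y < 1 + y := by
      apply lt_of_pow_lt_pow_left₀ 2 q2.le
      rw [hsq]
      nlinarith [mul_pos q2 (by nlinarith : 0 < 1 + y - δ ^ 2 * (1 - y))]
    rw [aux_symm f (by positivity) (by linarith) (by linarith), ← mul_assoc]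
    apply mul_le_mul _ _ (facts y hy) (by positivity)
    · exact aux_rpow hv hvy (by linarith) (by linarith)
    · exact aux_mono hf hs0.le hst (by linarith) (by linarith)
  have hSx : symmDelta 2 (δ * phiW x) f x = f (x - 2 * s) - 2 * f x + f (x + 2 * s) := by
    rw [hs2]; exact aux_symm f (by linarith) (by linarith) (by linarith)
  have hve : 0 < (1 - x ^ 2) ^ e := Real.rpow_pos_of_pos hv e
  have meas : ∀ c : ℝ, AEMeasurable
      (fun y => ENNReal.ofReal (f (y - s) - 2 * f y + f (y + s)))
      (volume.restrict (Icc (x - 2 * s) (x + 2 * s))) := fun _ =>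
    (cont.aemeasurable measurableSet_Icc).ennreal_ofReal
  calc ENNReal.ofReal (phiW x * (1 - x ^ 2) ^ e * symmDelta 2 (δ * phiW x) f x)
      ≤ ENNReal.ofReal (4 / δ * (1 - x ^ 2) ^ e *
          ∫ y in (x - 2 * s)..(x + 2 * s), (f (y - s) - 2 * f y + f (y + s))) := by
        apply ENNReal.ofReal_le_ofReal
        rw [hSx]
        have : phiW x = 2 * s / δ := by rw [← hs2]; field_simp
        rw [this]
        have := mul_le_mul_of_nonneg_left A (by positivity : 0 ≤ (1 - x ^ 2) ^ e / δ)
        calc _ = _ := ?_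
          _ ≤ _ := this
          _ = _ := ?_
        · ring
        · ring
    _ = ENNReal.ofReal (4 / δ) * (ENNReal.ofReal ((1 - x ^ 2) ^ e) *
          ∫⁻ y in Icc (x - 2 * s) (x + 2 * s),
            ENNReal.ofReal (f (y - s) - 2 * f y + f (y + s))) := by
        rw [ENNReal.ofReal_mul (by positivity), ENNReal.ofReal_mul (by positivity), B, mul_assoc]
    _ = ENNReal.ofReal (4 / δ) * 
          ∫⁻ y in Icc (x - 2 * s) (x + 2 * s),
            ENNReal.ofReal ((1 - x ^ 2) ^ e * (f (y - s) - 2 * f y + f (y + s))) := by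
        rw [← lintegral_const_mul'' _ (meas 0)]
        simp_rw [ENNReal.ofReal_mul hve.le]
    _ ≤ ENNReal.ofReal (4 / δ) * 
          ∫⁻ y in Icc (x - 2 * s) (x + 2 * s),
            ENNReal.ofReal (4 ^ |e|) *
              ENNReal.ofReal ((1 - y ^ 2) ^ e * symmDelta 2 (δ * phiW y) f y) := by
        gcongr 1
        apply setLIntegral_mono_ae' measurableSet_Icc
        refine Eventually.of_forall fun y hy => ?_
        rw [← ENNReal.ofReal_mul (by positivity)]
        exact ENNReal.ofReal_le_ofReal (D y hy)
    _ = ENNReal.ofReal (4 * 4 ^ |e| / δ) * 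
          ∫⁻ y in Icc (x - 2 * s) (x + 2 * s),
              ENNReal.ofReal ((1 - y ^ 2) ^ e * symmDelta 2 (δ * phiW y) f y) := by
        rw [lintegral_const_mul' _ _ ENNReal.ofReal_ne_top, ← mul_assoc,
          ← ENNReal.ofReal_mul (by positivity)]
        congr 2; ring
    _ ≤ _ := by
        gcongr 1
        apply lintegral_mono_set
        apply Icc_subset_Icc <;> linarith

theorem statement16 (β : ℝ) (q : ℝ≥0∞) (hq1 : 1 < q) (hq2 : q ≠ ∞) :
    ∃ c > (0 : ℝ), ∀ δ : ℝ, 0 < δ → δ < 1 / 100 →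
      ∀ f : ℝ → ℝ, f ∈ MSet 2 ∩ WSet q β β →
      (∃ a b : ℝ, ∀ x ∈ Icc (-1 : ℝ) (-1 + 100 * δ ^ 2), f x = a * x + b) →
      (∃ a b : ℝ, ∀ x ∈ Icc (1 - 100 * δ ^ 2) (1 : ℝ), f x = a * x + b) →
      OmegaMain 2 f δ (phipow (2 * β)) q ≤
        ENNReal.ofReal (c * δ ^ (1 / q.toReal - 1)) *
          OmegaMain 2 f δ (phipow (2 * β - 1 + 1 / q.toReal)) 1 := by
  obtain ⟨p, hp⟩ : ∃ p, p = q.toReal := ⟨_, rfl⟩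
  have hp1 : 1 < p := by
    rw [hp, ← ENNReal.toReal_one]
    exact (ENNReal.toReal_lt_toReal ENNReal.one_ne_top hq2).2 hq1
  have hp0 : 0 < p := by linarith
  have hq0 : q ≠ 0 := (zero_lt_one.trans hq1).ne'
  rw [← hp]
  obtain ⟨e, he⟩ : ∃ e, e = (2 * β - 1 + 1 / p) / 2 := ⟨_, rfl⟩
  refine ⟨(4 * 4 ^ |e|) ^ (1 - 1 / p), by positivity, ?_⟩
  intro δ hδ hδ1 f hf hL hR
  have hconv := aux_convex hf.1
  set A : ℝ≥0∞ := ∫⁻ y in Icc (-1 + 8 * δ ^ 2) (1 - 8 * δ ^ 2),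
          ENNReal.ofReal ((1 - y ^ 2) ^ e * symmDelta 2 (δ * phiW y) f y) with hA
  have hAle : A ≤ OmegaMain 2 f δ (phipow (2 * β - 1 + 1 / p)) 1 := by
    unfold OmegaMain
    refine le_trans ?_ (le_iSup₂ (f := fun h (_ : h ∈ Ioc (0 : ℝ) δ) =>
      LpOn (fun x => phipow (2 * β - 1 + 1 / p) x * symmDelta 2 (h * phiW x) f x) 1
      (-1 + 2 * ((2 : ℕ) : ℝ) ^ 2 * h ^ 2) (1 - 2 * ((2 : ℕ) : ℝ) ^ 2 * h ^ 2)) δ ⟨hδ, le_rfl⟩)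
    unfold LpOn
    rw [eLpNorm_one_eq_lintegral_enorm, hA]
    have e8 : 2 * ((2 : ℕ) : ℝ) ^ 2 = 8 := by norm_num
    rw [e8]
    apply lintegral_mono
    intro y
    unfold phipow
    rw [← he]
    exact Real.ofReal_le_enorm _
  have main : ∀ h ∈ Ioc (0 : ℝ) δ,
      LpOn (fun x => phipow (2 * β) x * symmDelta 2 (h * phiW x) f x) q
      (-1 + 2 * ((2 : ℕ) : ℝ) ^ 2 * h ^ 2) (1 - 2 * ((2 : ℕ) : ℝ) ^ 2 * h ^ 2) ≤
      ENNReal.ofReal ((4 * 4 ^ |e|) ^ (1 - 1 / p) * δ ^ (1 / p - 1)) * A := by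
    intro h hh
    set M : ℝ≥0∞ := ENNReal.ofReal (4 * 4 ^ |e| / δ) * A with hM
    have e8 : 2 * ((2 : ℕ) : ℝ) ^ 2 = 8 := by norm_num
    rw [e8]
    unfold LpOn
    rw [eLpNorm_eq_lintegral_rpow_enorm_toReal hq0 hq2, ← hp]
    set S : Set ℝ := Icc (-1 + 8 * δ ^ 2) (1 - 8 * δ ^ 2) with hS
    have hpt : ∀ x ∈ Icc (-1 + 8 * h ^ 2) (1 - 8 * h ^ 2),
        ‖phipow (2 * β) x * symmDelta 2 (h * phiW x) f x‖ₑ ^ p ≤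
        S.indicator (fun x => M ^ (p - 1) *
          ENNReal.ofReal ((1 - x ^ 2) ^ e * symmDelta 2 (δ * phiW x) f x)) x := by
      intro x hx
      by_cases hin : 18 * δ ^ 2 ≤ 1 - x ∧ 18 * δ ^ 2 ≤ 1 + x
      · obtain ⟨h1, h2⟩ := hin
        have hxS : x ∈ S := by
          constructor <;> nlinarith
        rw [indicator_of_mem hxS]
        obtain ⟨k1, k2, hφ⟩ := aux_step hδ h1 h2
        have key := aux_key hconv (e := e) hδ h1 h2
        rw [← hA, ← hM] at key
        have hd2 : 0 < δ ^ 2 := by positivity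
        have hv : 0 < 1 - x ^ 2 := by nlinarith
        have hH : 0 < δ * phiW x := by positivity
        have hhφ : 0 < h * phiW x := mul_pos hh.1 hφ
        have hle : h * phiW x ≤ δ * phiW x := mul_le_mul_of_nonneg_right hh.2 hφ.le
        have e1 := aux_symm f (x := x) hhφ.le (by linarith) (by linarith)
        have e2 := aux_symm f (x := x) hH.le (by linarith) (by linarith)
        have n1 : 0 ≤ symmDelta 2 (h * phiW x) f x := by
          rw [e1]; exact aux_nonneg hconv hhφ.le (by linarith) (by linarith)
        have n2 : symmDelta 2 (h * phiW x) f x ≤ symmDelta 2 (δ * phiW x) f x := by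
          rw [e1, e2]; exact aux_mono hconv hhφ.le hle (by linarith) (by linarith)
        obtain ⟨G, hG⟩ : ∃ G, G = symmDelta 2 (δ * phiW x) f x := ⟨_, rfl⟩
        rw [← hG] at n2 key ⊢
        have hG0 : 0 ≤ G := n1.trans n2
        have hw : phipow (2 * β) x = (1 - x ^ 2) ^ β := by
          unfold phipow; congr 1; ring
        have hwp : 0 < (1 - x ^ 2) ^ β := Real.rpow_pos_of_pos hv _
        have hep : 0 < (1 - x ^ 2) ^ e := Real.rpow_pos_of_pos hv _
        rw [hw, Real.enorm_of_nonneg (mul_nonneg hwp.le n1)]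
        have ident : ((1 - x ^ 2) ^ β * G) ^ p =
            (phiW x * (1 - x ^ 2) ^ e * G) ^ (p - 1) * ((1 - x ^ 2) ^ e * G) := by
          have f1 : phiW x = (1 - x ^ 2) ^ (1 / 2 : ℝ) := Real.sqrt_eq_rpow _
          rw [f1, ← Real.rpow_add hv, Real.mul_rpow hwp.le hG0,
            Real.mul_rpow (Real.rpow_nonneg hv.le _) hG0, ← Real.rpow_mul hv.le,
            ← Real.rpow_mul hv.le]
          have g1 : G ^ p = G ^ (p - 1) * G := by
            have := Real.rpow_add' (x := G) hG0 (y := p - 1) (z := 1) (by linarith)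
            rw [Real.rpow_one] at this
            rw [← this]; congr 1; ring
          have g2 : (1 - x ^ 2) ^ (β * p) =
              (1 - x ^ 2) ^ ((1 / 2 + e) * (p - 1)) * (1 - x ^ 2) ^ e := by
            rw [← Real.rpow_add hv]
            congr 1
            rw [he]; field_simp; ring
          rw [g1, g2]; ring
        calc ENNReal.ofReal ((1 - x ^ 2) ^ β * symmDelta 2 (h * phiW x) f x) ^ p
            ≤ ENNReal.ofReal ((1 - x ^ 2) ^ β * G) ^ p := by gcongr
          _ = ENNReal.ofReal (phiW x * (1 - x ^ 2) ^ e * G) ^ (p - 1) *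
              ENNReal.ofReal ((1 - x ^ 2) ^ e * G) := by
            rw [ENNReal.ofReal_rpow_of_nonneg (by positivity) hp0.le, ident,
              ENNReal.ofReal_mul (by positivity),
              ENNReal.ofReal_rpow_of_nonneg (by positivity) (by linarith)]
          _ ≤ _ := by
            gcongr
      · have := aux_zero (f := f) hh.1 hh.2 hδ1 hL hR hx.1 hx.2 (by
          by_contra hc
          push Not at hc
          exact hin hc)
        rw [this]
        simp [hp0]
    have hint : (∫⁻ x in Icc (-1 + 8 * h ^ 2) (1 - 8 * h ^ 2),
        ‖phipow (2 * β) x * symmDelta 2 (h * phiW x) f x‖ₑ ^ p) ≤ M ^ (p - 1) * A := by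
      calc _ ≤ ∫⁻ x in Icc (-1 + 8 * h ^ 2) (1 - 8 * h ^ 2),
          S.indicator (fun x => M ^ (p - 1) *
          ENNReal.ofReal ((1 - x ^ 2) ^ e * symmDelta 2 (δ * phiW x) f x)) x :=
            setLIntegral_mono_ae' measurableSet_Icc (Eventually.of_forall hpt)
        _ ≤ ∫⁻ x, S.indicator (fun x => M ^ (p - 1) *
          ENNReal.ofReal ((1 - x ^ 2) ^ e * symmDelta 2 (δ * phiW x) f x)) x :=
            setLIntegral_le_lintegral _ _
        _ = M ^ (p - 1) * A := by
          rw [lintegral_indicator measurableSet_Icc, lintegral_const_mul]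
          have hfm : Measurable f := hf.2.1
          have hpm : Measurable phiW := by unfold phiW; fun_prop
          have hst : Measurable (fun x => symmDelta 2 (δ * phiW x) f x) := by
            unfold symmDelta
            apply Measurable.ite
            · apply MeasurableSet.inter
              · exact measurableSet_Icc.preimage (by fun_prop)
              · exact measurableSet_Icc.preimage (by fun_prop)
            · fun_prop
            · fun_prop
          have : Measurable (fun x : ℝ => (1 - x ^ 2) ^ e) := by fun_prop
          exact (this.mul hst).ennreal_ofReal
    calc _ ≤ (M ^ (p - 1) * A) ^ (1 / p) := by gcongr
      _ = _ := by
        rw [hM, ENNReal.mul_rpow_of_nonneg _ _ (by linarith : 0 ≤ p - 1), mul_assoc]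
        have hAA : A ^ (p - 1) * A = A ^ p := by
          have := ENNReal.rpow_add_of_nonneg (x := A) (p - 1) 1 (by linarith) zero_le_one
          rw [ENNReal.rpow_one] at this
          rw [← this]; congr 1; ring
        rw [hAA, ENNReal.mul_rpow_of_nonneg _ _ (by positivity), ← ENNReal.rpow_mul,
          ← ENNReal.rpow_mul, mul_one_div_cancel hp0.ne', ENNReal.rpow_one,
          ENNReal.ofReal_rpow_of_pos (by positivity), Real.div_rpow (by positivity) hδ.le]
        congr 2
        have x1 : (p - 1) * (1 / p) = 1 - 1 / p := by field_simp
        rw [x1, show 1 / p - 1 = -(1 - 1 / p) by ring, Real.rpow_neg hδ.le, div_eq_mul_inv]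
  calc OmegaMain 2 f δ (phipow (2 * β)) q ≤ _ := iSup₂_le main
    _ ≤ _ := by gcongr
end
end
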